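/- arXiv:1201.1975 — 3 statements merged into one kernel-verified Lean document; each statement's English description precedes it below -/
import Mathlib

section
/- For every positive integer n, the iterated improper complex integral J_n = ∫_{-∞}^{∞} ds₁ e^{−is₁²} ∫_{-∞}^{s₁} ds₂ e^{is₂²} ∫_{-∞}^{s₂} ds₃ e^{−is₃²} ⋯ ∫_{-∞}^{s_{2n-1}} ds_{2n} e^{is_{2n}²} converges and equals (1/n!)·(π/2)ⁿ. -/
open Real MeasureTheory Filter Topology Complex

/-- Fubini on a triangle. -/
theorem lz_triangle {E : Type*} [NormedAddCommGroup E] [NormedSpace ℝ E] [CompleteSpace E]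
    (h : ℝ → ℝ → E) (hc : Continuous (Function.uncurry h)) (L : ℝ) (hL : 0 ≤ L) :
    ∫ Y in (0:ℝ)..L, ∫ s in Y..L, h s Y = ∫ s in (0:ℝ)..L, ∫ Y in (0:ℝ)..s, h s Y := by
  have key : ∫ Y in (0:ℝ)..L, ∫ s in (0:ℝ)..L, (Set.Ioi Y).indicator (fun s => h s Y) s
      = ∫ s in (0:ℝ)..L, ∫ Y in (0:ℝ)..L, (Set.Ioi Y).indicator (fun s => h s Y) s := by
    apply MeasureTheory.intervalIntegral_intervalIntegral_swap
    have hS : MeasurableSet {p : ℝ × ℝ | p.1 < p.2} :=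
      (isOpen_lt continuous_fst continuous_snd).measurableSet
    have h1 : IntegrableOn (fun p : ℝ × ℝ => h p.2 p.1) (Set.uIoc 0 L ×ˢ Set.uIoc 0 L)
        (volume.prod volume) := by
      apply IntegrableOn.mono_set (t := Set.uIcc 0 L ×ˢ Set.uIcc 0 L)
      · exact (hc.comp (continuous_snd.prodMk continuous_fst)).continuousOn.integrableOn_compact
          (isCompact_uIcc.prod isCompact_uIcc)
      · exact Set.prod_mono Set.uIoc_subset_uIcc Set.uIoc_subset_uIcc
    have h2 := Integrable.indicator h1 hS
    refine h2.congr (Filter.Eventually.of_forall ?_)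
    rintro ⟨Y, s⟩
    simp [Set.indicator, Function.uncurry]
  have e1 : ∫ Y in (0:ℝ)..L, ∫ s in Y..L, h s Y
      = ∫ Y in (0:ℝ)..L, ∫ s in (0:ℝ)..L, (Set.Ioi Y).indicator (fun s => h s Y) s := by
    apply intervalIntegral.integral_congr
    intro Y hY
    rw [Set.uIcc_of_le hL] at hY
    simp only
    rw [intervalIntegral.integral_of_le hY.2, intervalIntegral.integral_of_le hL,
      setIntegral_indicator measurableSet_Ioi]
    congr 2
    ext s
    simp only [Set.mem_Ioc, Set.mem_inter_iff, Set.mem_Ioi]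
    constructor
    · rintro ⟨h1, h2⟩; exact ⟨⟨lt_of_le_of_lt hY.1 h1, h2⟩, h1⟩
    · rintro ⟨⟨h1, h2⟩, h3⟩; exact ⟨h3, h2⟩
  have e2 : ∫ s in (0:ℝ)..L, ∫ Y in (0:ℝ)..s, h s Y
      = ∫ s in (0:ℝ)..L, ∫ Y in (0:ℝ)..L, (Set.Ioi Y).indicator (fun s => h s Y) s := by
    apply intervalIntegral.integral_congr
    intro s hs
    rw [Set.uIcc_of_le hL] at hs
    simp only
    have : ∀ Y, (Set.Ioi Y).indicator (fun s => h s Y) s = (Set.Iio s).indicator (fun Y => h s Y) Y := by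
      intro Y; simp [Set.indicator]
    simp_rw [this]
    rw [intervalIntegral.integral_of_le hs.1, intervalIntegral.integral_of_le hL,
      setIntegral_indicator measurableSet_Iio, integral_Ioc_eq_integral_Ioo]
    congr 2
    ext Y
    simp only [Set.mem_Ioc, Set.mem_inter_iff, Set.mem_Iio, Set.mem_Ioo]
    constructor
    · rintro ⟨h1, h2⟩; exact ⟨⟨h1, h2.le.trans hs.2⟩, h2⟩
    · rintro ⟨⟨h1, h2⟩, h3⟩; exact ⟨h1, h3⟩
  rw [e1, e2, key]

/-- Leibniz rule in integrated form. -/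
theorem lz_leibniz (f f' : ℝ → ℝ → ℂ) (hf : Continuous (Function.uncurry f))
    (hf' : Continuous (Function.uncurry f'))
    (hd : ∀ Y s, 0 < Y → Y < s → HasDerivAt (fun s => f s Y) (f' s Y) s) (L : ℝ) (hL : 0 ≤ L) :
    ∫ Y in (0:ℝ)..L, f L Y = ∫ s in (0:ℝ)..L, (f s s + ∫ Y in (0:ℝ)..s, f' s Y) := by
  have c1 : Continuous fun s => ∫ Y in (0:ℝ)..s, f' s Y :=
    intervalIntegral.continuous_parametric_intervalIntegral_of_continuous hf' continuous_id
  have c2 : Continuous fun s => f s s := hf.comp (continuous_id.prodMk continuous_id)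
  rw [intervalIntegral.integral_add (c2.intervalIntegrable _ _) (c1.intervalIntegrable _ _),
    ← lz_triangle f' hf' L hL]
  have c3 : Continuous fun Y => ∫ s in Y..L, f' s Y := by
    have : Continuous fun Y => - ∫ s in L..Y, f' s Y :=
      (intervalIntegral.continuous_parametric_intervalIntegral_of_continuous
        (f := fun Y s => f' s Y) (hf'.comp (continuous_snd.prodMk continuous_fst)) continuous_id).neg
    refine this.congr fun Y => ?_
    rw [intervalIntegral.integral_symm, neg_neg]
  rw [← intervalIntegral.integral_add (c2.intervalIntegrable _ _) (c3.intervalIntegrable _ _)]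
  rw [intervalIntegral.integral_of_le hL, intervalIntegral.integral_of_le hL]
  apply setIntegral_congr_fun measurableSet_Ioc
  intro Y hY
  simp only
  have := intervalIntegral.integral_eq_sub_of_hasDerivAt_of_le (f := fun s => f s Y)
    (f' := fun s => f' s Y) hY.2
    (hf.comp (continuous_id.prodMk continuous_const)).continuousOn
    (fun s hs => hd Y s hY.1 hs.1)
    ((hf'.comp (continuous_id.prodMk continuous_const)).intervalIntegrable _ _)
  rw [this]; simp

/-- one-sided convolution -/
noncomputable def lzC (f h : ℝ → ℝ) (z : ℝ) : ℝ := ∫ y in (0:ℝ)..z, f (z - y) * h y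

theorem lzC_cont {f h : ℝ → ℝ} (hf : Continuous f) (hh : Continuous h) : Continuous (lzC f h) := by
  unfold lzC
  exact intervalIntegral.continuous_parametric_intervalIntegral_of_continuous
    (f := fun z y => f (z - y) * h y) (by fun_prop) continuous_id

theorem lzC_left_comm {f h k : ℝ → ℝ} (hf : Continuous f) (hh : Continuous h) (hk : Continuous k)
    (z : ℝ) (hz : 0 ≤ z) : lzC f (lzC h k) z = lzC h (lzC f k) z := by
  have main : ∀ {f h : ℝ → ℝ}, Continuous f → Continuous h → lzC f (lzC h k) z
      = ∫ w in (0:ℝ)..z, ∫ y in w..z, f (z - y) * (h (y - w) * k w) := by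
    intro f h hf hh
    rw [lz_triangle (fun y w => f (z - y) * (h (y - w) * k w)) (by fun_prop) z hz]
    simp only [lzC, ← intervalIntegral.integral_const_mul]
  rw [main hf hh, main hh hf]
  apply intervalIntegral.integral_congr
  intro w _
  simp only
  have := intervalIntegral.integral_comp_sub_left (a := w) (b := z)
    (fun y => h (z - y) * (f (y - w) * k w)) (z + w)
  simp only [add_sub_cancel_left, add_sub_cancel_right] at this
  rw [← this]
  apply intervalIntegral.integral_congr
  intro y _
  simp only
  rw [show z - (z + w - y) = y - w by ring, show z + w - y - w = z - y by ring]
  ring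

theorem lz_continuous_sinc : Continuous Real.sinc := Real.continuous_sinc

/-- convolution powers of sinc; `lzG k` is the `(k+1)`-fold power -/
noncomputable def lzG : ℕ → ℝ → ℝ
  | 0 => Real.sinc
  | k + 1 => lzC Real.sinc (lzG k)

theorem lzG_cont (k : ℕ) : Continuous (lzG k) := by
  induction k with
  | zero => exact lz_continuous_sinc
  | succ k ih => exact lzC_cont lz_continuous_sinc ih

theorem lz_mul_sinc (z : ℝ) : z * Real.sinc z = Real.sin z := by
  by_cases h : z = 0
  · simp [h]
  · rw [Real.sinc_of_ne_zero h]; field_simp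

theorem lz_mul_lzC {h : ℝ → ℝ} (hh : Continuous h) (z : ℝ) :
    z * lzC Real.sinc h z = lzC Real.sin h z + lzC Real.sinc (fun y => y * h y) z := by
  have hs := lz_continuous_sinc
  unfold lzC
  rw [← intervalIntegral.integral_const_mul, ← intervalIntegral.integral_add]
  · apply intervalIntegral.integral_congr
    intro y _
    simp only
    rw [← lz_mul_sinc (z - y)]
    ring
  · apply Continuous.intervalIntegrable; fun_prop
  · apply Continuous.intervalIntegrable; fun_prop

theorem lzC_congr {f h k : ℝ → ℝ} (z : ℝ) (hz : 0 ≤ z) (hk : ∀ y, 0 ≤ y → h y = k y) :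
    lzC f h z = lzC f k z := by
  unfold lzC
  apply intervalIntegral.integral_congr
  intro y hy
  rw [Set.uIcc_of_le hz] at hy
  simp only
  rw [hk y hy.1]

theorem lzC_const_mul (f h : ℝ → ℝ) (c z : ℝ) : lzC f (fun y => c * h y) z = c * lzC f h z := by
  unfold lzC
  rw [← intervalIntegral.integral_const_mul]
  apply intervalIntegral.integral_congr
  intro y hy
  simp only
  ring

theorem lz_mul_G_succ (k : ℕ) (z : ℝ) (hz : 0 ≤ z) :
    z * lzG (k + 1) z = (k + 2) * lzC Real.sin (lzG k) z := by
  have hs := lz_continuous_sinc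
  induction k generalizing z with
  | zero =>
    simp only [lzG]
    rw [lz_mul_lzC hs]
    have e : (fun y => y * Real.sinc y) = Real.sin := funext lz_mul_sinc
    rw [e]
    have : lzC Real.sinc Real.sin z = lzC Real.sin Real.sinc z := by
      unfold lzC
      have := intervalIntegral.integral_comp_sub_left (a := 0) (b := z)
        (fun y => Real.sin (z - y) * Real.sinc y) z
      simp only [sub_self, sub_zero] at this
      rw [← this]
      apply intervalIntegral.integral_congr
      intro y hy
      simp only [sub_sub_cancel]
      ring
    rw [this]; push_cast; ring
  | succ k ih =>
    rw [show lzG (k + 1 + 1) = lzC Real.sinc (lzG (k + 1)) from rfl, lz_mul_lzC (lzG_cont _)]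
    rw [lzC_congr z hz ih, lzC_const_mul, lzC_left_comm hs Real.continuous_sin (lzG_cont k) z hz]
    rw [show lzC Real.sinc (lzG k) = lzG (k+1) from rfl]
    push_cast; ring

/-- data: `A = z G`, with two derivatives. -/
theorem lz_conv_sin_deriv {h : ℝ → ℝ} (hh : Continuous h) :
    ∃ A1 : ℝ → ℝ, A1 0 = 0 ∧ (∀ z, HasDerivAt (lzC Real.sin h) (A1 z) z) ∧
      (∀ z, HasDerivAt A1 (h z - lzC Real.sin h z) z) := by
  let P : ℝ → ℝ := fun z => ∫ y in (0:ℝ)..z, Real.cos y * h y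
  let Q : ℝ → ℝ := fun z => ∫ y in (0:ℝ)..z, Real.sin y * h y
  have hP : ∀ z, HasDerivAt P (Real.cos z * h z) z := fun z =>
    intervalIntegral.integral_hasDerivAt_right
      ((Real.continuous_cos.mul hh).intervalIntegrable _ _)
      (Real.continuous_cos.mul hh).aestronglyMeasurable.stronglyMeasurableAtFilter
      (Real.continuous_cos.mul hh).continuousAt
  have hQ : ∀ z, HasDerivAt Q (Real.sin z * h z) z := fun z =>
    intervalIntegral.integral_hasDerivAt_right
      ((Real.continuous_sin.mul hh).intervalIntegrable _ _)
      (Real.continuous_sin.mul hh).aestronglyMeasurable.stronglyMeasurableAtFilter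
      (Real.continuous_sin.mul hh).continuousAt
  have hA : lzC Real.sin h = fun z => Real.sin z * P z - Real.cos z * Q z := by
    funext z
    simp only [lzC, P, Q]
    rw [← intervalIntegral.integral_const_mul, ← intervalIntegral.integral_const_mul,
      ← intervalIntegral.integral_sub]
    · apply intervalIntegral.integral_congr
      intro y _
      simp only [Real.sin_sub]
      ring
    · apply Continuous.intervalIntegrable; fun_prop
    · apply Continuous.intervalIntegrable; fun_prop
  refine ⟨fun z => Real.cos z * P z + Real.sin z * Q z, by simp [P], fun z => ?_, fun z => ?_⟩
  · rw [hA]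
    have := ((Real.hasDerivAt_sin z).mul (hP z)).sub ((Real.hasDerivAt_cos z).mul (hQ z))
    refine this.congr_deriv ?_
    ring
  · rw [hA]
    have := ((Real.hasDerivAt_cos z).mul (hP z)).add ((Real.hasDerivAt_sin z).mul (hQ z))
    refine this.congr_deriv ?_
    have := Real.sin_sq_add_cos_sq z
    linear_combination (h z) * this

/-- First step: the solution formula is the integral of its derivative. -/
theorem lz_step1 (a : ℝ) (G A A1 : ℝ → ℝ) (hG : Continuous G)
    (hA : ∀ z, HasDerivAt A (A1 z) z) (hA1 : Continuous A1) (hGA : ∀ z, 0 ≤ z → z * G z = A z)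
    (L : ℝ) (hL : 0 ≤ L) :
    ∫ Y in (0:ℝ)..L, Complex.exp (-Complex.I * ((2 * a + L) * Y : ℝ)) * (((L - Y) * G ((L - Y) * Y) : ℝ) : ℂ)
     = ∫ s in (0:ℝ)..L, ∫ Y in (0:ℝ)..s, Complex.exp (-Complex.I * ((2 * a + s) * Y : ℝ)) *
        ((A1 ((s - Y) * Y) : ℂ) - Complex.I * (A ((s - Y) * Y) : ℂ)) := by
  have hAc : Continuous A := continuous_iff_continuousAt.2 fun z => (hA z).continuousAt
  rw [lz_leibniz (fun s Y => Complex.exp (-Complex.I * ((2 * a + s) * Y : ℝ)) * (((s - Y) * G ((s - Y) * Y) : ℝ) : ℂ))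
    (fun s Y => Complex.exp (-Complex.I * ((2 * a + s) * Y : ℝ)) *
        ((A1 ((s - Y) * Y) : ℂ) - Complex.I * (A ((s - Y) * Y) : ℂ))) (by fun_prop) (by fun_prop) ?_ L hL]
  · simp
  · intro Y s hY hs
    have h1 : HasDerivAt (fun s : ℝ => (s - Y) * G ((s - Y) * Y)) (A1 ((s - Y) * Y)) s := by
      have h2 : HasDerivAt (fun s : ℝ => A ((s - Y) * Y) / Y) (A1 ((s - Y) * Y)) s := by
        have h3 : HasDerivAt (fun s : ℝ => (s - Y) * Y) (1 * Y) s :=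
          ((hasDerivAt_id s).sub_const Y).mul_const Y
        have := ((hA ((s - Y) * Y)).comp s h3).div_const Y
        refine this.congr_deriv ?_
        field_simp
      refine h2.congr_of_eventuallyEq ?_
      filter_upwards [lt_mem_nhds hs] with t ht
      rw [← hGA _ (mul_nonneg (sub_nonneg.2 ht.le) hY.le)]
      field_simp
    have h4 : HasDerivAt (fun s : ℝ => Complex.exp (-Complex.I * ((2 * a + s) * Y : ℝ)))
        (Complex.exp (-Complex.I * ((2 * a + s) * Y : ℝ)) * (-Complex.I * (1 * Y : ℝ))) s := by
      have : HasDerivAt (fun s : ℝ => (2 * a + s) * Y) (1 * Y) s :=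
        ((hasDerivAt_id s).const_add (2 * a)).mul_const Y
      exact (this.ofReal_comp.const_mul (-Complex.I)).cexp
    have := h4.mul h1.ofReal_comp
    refine this.congr_deriv ?_
    rw [← hGA _ (mul_nonneg (sub_nonneg.2 hs.le) hY.le)]
    push_cast
    ring

/-- Second step. -/
theorem lz_step2 (a : ℝ) (A A1 A2 : ℝ → ℝ)
    (hA : ∀ z, HasDerivAt A (A1 z) z) (hA1 : ∀ z, HasDerivAt A1 (A2 z) z) (hA2 : Continuous A2)
    (hA0 : A 0 = 0) (L : ℝ) (hL : 0 ≤ L) :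
    Complex.exp (Complex.I * ((a + L) ^ 2 : ℝ)) *
      ∫ Y in (0:ℝ)..L, Complex.exp (-Complex.I * ((2 * a + L) * Y : ℝ)) *
        ((A1 ((L - Y) * Y) : ℂ) - Complex.I * (A ((L - Y) * Y) : ℂ))
     = ∫ s in (0:ℝ)..L, Complex.exp (Complex.I * ((a + s) ^ 2 : ℝ)) * (A1 0 +
        ∫ Y in (0:ℝ)..s, Complex.exp (-Complex.I * ((2 * a + s) * Y : ℝ)) *
          (((s - Y) * (A2 ((s - Y) * Y) + A ((s - Y) * Y)) : ℝ) : ℂ)) := by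
  have hAc : Continuous A := continuous_iff_continuousAt.2 fun z => (hA z).continuousAt
  have hA1c : Continuous A1 := continuous_iff_continuousAt.2 fun z => (hA1 z).continuousAt
  let E : ℝ → ℝ → ℂ := fun s Y => Complex.exp (Complex.I * ((a + s) ^ 2 - (2 * a + s) * Y : ℝ))
  have hE : ∀ s Y, E s Y = Complex.exp (Complex.I * ((a + s) ^ 2 : ℝ)) *
      Complex.exp (-Complex.I * ((2 * a + s) * Y : ℝ)) := by
    intro s Y
    simp only [E]
    rw [← Complex.exp_add]; congr 1; push_cast; ring
  have hEc : Continuous (Function.uncurry E) := by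
    simp only [E]; fun_prop
  let D : ℝ → ℝ → ℂ := fun s Y => E s Y * (Complex.I * (2 * (a + s) - Y)
        * ((A1 ((s - Y) * Y) : ℂ) - Complex.I * (A ((s - Y) * Y) : ℂ))
        + Y * ((A2 ((s - Y) * Y) : ℂ) - Complex.I * (A1 ((s - Y) * Y) : ℂ)))
  have hDc : Continuous (Function.uncurry D) := by
    simp only [D, E]; fun_prop
  have hz : ∀ Y s : ℝ, HasDerivAt (fun s : ℝ => (s - Y) * Y) Y s := by
    intro Y s
    simpa using ((hasDerivAt_id s).sub_const Y).mul_const Y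
  have hL1 := lz_leibniz (fun s Y => E s Y *
        ((A1 ((s - Y) * Y) : ℂ) - Complex.I * (A ((s - Y) * Y) : ℂ))) D
        (by simp only [E]; fun_prop) hDc (by
      intro Y s _ _
      have h1 : HasDerivAt (fun s : ℝ => E s Y) (E s Y * (Complex.I * (2 * (a + s) - Y : ℝ))) s := by
        have : HasDerivAt (fun s : ℝ => (a + s) ^ 2 - (2 * a + s) * Y) (2 * (a + s) - Y) s := by
          have := (((hasDerivAt_id s).const_add a).pow 2).sub
            (((hasDerivAt_id s).const_add (2 * a)).mul_const Y)
          refine this.congr_deriv ?_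
          simp
        exact (this.ofReal_comp.const_mul Complex.I).cexp
      have h2 := ((hA ((s - Y) * Y)).comp s (hz Y s)).ofReal_comp
      have h3 := ((hA1 ((s - Y) * Y)).comp s (hz Y s)).ofReal_comp
      have := h1.mul (h3.sub (h2.const_mul Complex.I))
      refine this.congr_deriv ?_
      simp only [D, Function.comp, Pi.sub_apply]
      push_cast
      ring) L hL
  rw [← intervalIntegral.integral_const_mul]
  simp_rw [← mul_assoc, ← hE]
  rw [hL1]
  apply intervalIntegral.integral_congr
  intro s _
  simp only
  rw [mul_add, ← intervalIntegral.integral_const_mul]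
  simp_rw [← mul_assoc, ← hE]
  -- total derivative
  have hT : ∀ Y : ℝ, HasDerivAt (fun Y : ℝ => E s Y * (Complex.I * (A ((s - Y) * Y) : ℂ) - (A1 ((s - Y) * Y) : ℂ)))
      (D s Y - E s Y * (((s - Y) * (A2 ((s - Y) * Y) + A ((s - Y) * Y)) : ℝ) : ℂ)) Y := by
    intro Y
    have hzY : HasDerivAt (fun Y : ℝ => (s - Y) * Y) (s - 2 * Y) Y := by
      have := ((hasDerivAt_id Y).const_sub s).mul (hasDerivAt_id Y)
      refine this.congr_deriv ?_
      simp; ring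
    have h1 : HasDerivAt (fun Y : ℝ => E s Y) (E s Y * (Complex.I * (-(2 * a + s) : ℝ))) Y := by
      have : HasDerivAt (fun Y : ℝ => (a + s) ^ 2 - (2 * a + s) * Y) (-(2 * a + s)) Y := by
        have := ((hasDerivAt_id Y).const_mul (2 * a + s)).const_sub ((a + s) ^ 2)
        refine this.congr_deriv ?_
        simp
      exact (this.ofReal_comp.const_mul Complex.I).cexp
    have h2 := (HasDerivAt.comp (h := fun Y : ℝ => (s - Y) * Y) Y (hA ((s - Y) * Y)) hzY).ofReal_comp
    have h3 := (HasDerivAt.comp (h := fun Y : ℝ => (s - Y) * Y) Y (hA1 ((s - Y) * Y)) hzY).ofReal_comp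
    have := h1.mul ((h2.const_mul Complex.I).sub h3)
    refine this.congr_deriv ?_
    simp only [D, Function.comp, Pi.sub_apply]
    push_cast
    have hI := Complex.I_sq
    linear_combination (E s Y * A ((s - Y) * Y) * (s - Y)) * hI
  have hEs : Continuous (E s) := by simp only [E]; fun_prop
  have hDs : Continuous (D s) := by simp only [D]; fun_prop
  have hI2 : Continuous fun Y : ℝ => E s Y * (((s - Y) * (A2 ((s - Y) * Y) + A ((s - Y) * Y)) : ℝ) : ℂ) := by
    fun_prop
  have hF := intervalIntegral.integral_eq_sub_of_hasDerivAt (a := 0) (b := s) (fun Y _ => hT Y)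
    ((hDs.sub hI2).intervalIntegrable _ _)
  rw [intervalIntegral.integral_sub (hDs.intervalIntegrable _ _) (hI2.intervalIntegrable _ _)] at hF
  have hE0 : E s 0 = Complex.exp (Complex.I * ((a + s) ^ 2 : ℝ)) := by simp [E]
  rw [sub_eq_iff_eq_add] at hF
  rw [hF]
  simp only [sub_self, zero_mul, hA0, mul_zero, hE0, sub_zero]
  push_cast
  ring

/-- iterated integrals -/
noncomputable def lzW (a : ℝ) : ℕ → (ℕ → ℝ → ℂ) → ℝ → ℂ
  | 0, _, _ => 1
  | m + 1, φ, b => ∫ s in a..b, φ 0 s * lzW a m (fun i => φ (i + 1)) s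

theorem lzW_cont (a : ℝ) (m : ℕ) (φ : ℕ → ℝ → ℂ) (hφ : ∀ i, Continuous (φ i)) :
    Continuous (lzW a m φ) := by
  induction m generalizing φ with
  | zero => exact continuous_const
  | succ m ih =>
    have := ih (fun i => φ (i + 1)) (fun i => hφ _)
    exact intervalIntegral.continuous_primitive
      (fun _ _ => ((hφ 0).mul this).intervalIntegrable _ _) a

/-- ordered simplex -/
def lzS (m : ℕ) (a b : ℝ) : Set (Fin m → ℝ) :=
  {s | (∀ i j : Fin m, i ≤ j → s j ≤ s i) ∧ ∀ i, a ≤ s i ∧ s i ≤ b}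

theorem lzS_closed (m : ℕ) (a b : ℝ) : IsClosed (lzS m a b) := by
  unfold lzS
  simp only [Set.ofPred_and, Set.ofPred_forall]
  refine IsClosed.inter ?_ ?_
  · exact isClosed_iInter fun i => isClosed_iInter fun j => isClosed_iInter fun _ =>
      isClosed_le (continuous_apply j) (continuous_apply i)
  · exact isClosed_iInter fun i => (isClosed_le continuous_const (continuous_apply i)).inter
      (isClosed_le (continuous_apply i) continuous_const)

theorem lzS_compact (m : ℕ) (a b : ℝ) : IsCompact (lzS m a b) := by
  refine IsCompact.of_isClosed_subset
    (isCompact_univ_pi (fun _ : Fin m => isCompact_Icc (a := a) (b := b))) (lzS_closed m a b) ?_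
  intro s hs i _
  exact hs.2 i

theorem lzS_cons (m : ℕ) (a b x : ℝ) (t : Fin m → ℝ) :
    (Fin.cons x t : Fin (m + 1) → ℝ) ∈ lzS (m + 1) a b ↔ x ∈ Set.Icc a b ∧ t ∈ lzS m a x := by
  constructor
  · rintro ⟨h1, h2⟩
    refine ⟨by simpa using h2 0, fun i j hij => ?_, fun i => ?_⟩
    · simpa using h1 i.succ j.succ (Fin.succ_le_succ_iff.2 hij)
    · have := h2 i.succ
      have h3 := h1 0 i.succ (Fin.zero_le _)
      simp only [Fin.cons_succ, Fin.cons_zero] at this h3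
      exact ⟨this.1, h3⟩
  · rintro ⟨hx, h1, h2⟩
    refine ⟨fun i j hij => ?_, fun i => ?_⟩
    · induction i using Fin.cases with
      | zero =>
        induction j using Fin.cases with
        | zero => simp
        | succ j => simpa using (h2 j).2
      | succ i =>
        induction j using Fin.cases with
        | zero => exact absurd hij (by simp)
        | succ j => simpa using h1 i j (Fin.succ_le_succ_iff.1 hij)
    · induction i using Fin.cases with
      | zero => simpa using hx
      | succ i => simpa using ⟨(h2 i).1, (h2 i).2.trans hx.2⟩

theorem lzW_eq (m : ℕ) (a b : ℝ) (hab : a ≤ b) (φ : ℕ → ℝ → ℂ) (hφ : ∀ i, Continuous (φ i)) :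
    ∫ s in lzS m a b, ∏ i : Fin m, φ i (s i) = lzW a m φ b := by
  induction m generalizing φ b with
  | zero =>
    have : lzS 0 a b = Set.univ := by
      ext s; simp [lzS]
    rw [this]
    simp [lzW, integral_unique, Measure.real, volume_pi, Measure.pi_of_empty]
  | succ m ih =>
    have hint : IntegrableOn (fun s : Fin (m+1) → ℝ => ∏ i : Fin (m+1), φ i (s i)) (lzS (m+1) a b) := by
      apply ContinuousOn.integrableOn_compact (lzS_compact _ _ _)
      apply Continuous.continuousOn
      fun_prop
    have hint2 := (integrable_indicator_iff (lzS_closed (m+1) a b).measurableSet).2 hint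
    rw [← integral_indicator (lzS_closed (m+1) a b).measurableSet]
    have mp := (volume_preserving_piFinSuccAbove (fun _ : Fin (m+1) => ℝ) 0).symm
    have hint3 := (mp.integrable_comp_emb (MeasurableEquiv.measurableEmbedding _)).2 hint2
    rw [← mp.integral_comp']
    have hc : ∀ p : ℝ × (Fin m → ℝ), (MeasurableEquiv.piFinSuccAbove (fun _ : Fin (m+1) => ℝ) 0).symm p
        = (Fin.cons p.1 p.2 : Fin (m+1) → ℝ) := by
      intro p
      simp [MeasurableEquiv.piFinSuccAbove_symm_apply, Fin.insertNthEquiv]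
    rw [Measure.volume_eq_prod] at hint3 ⊢
    refine (integral_prod _ hint3).trans ?_
    simp only [Function.comp, hc]
    rw [lzW, intervalIntegral.integral_of_le hab, ← integral_Icc_eq_integral_Ioc,
      ← integral_indicator measurableSet_Icc]
    congr 1
    funext x
    by_cases hx : x ∈ Set.Icc a b
    · rw [Set.indicator_of_mem hx, ← ih x hx.1 _ (fun i => hφ _),
        ← integral_indicator (lzS_closed m a x).measurableSet, ← integral_const_mul]
      congr 1
      funext t
      by_cases ht : t ∈ lzS m a x
      · rw [Set.indicator_of_mem ((lzS_cons m a b x t).2 ⟨hx, ht⟩), Set.indicator_of_mem ht,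
          Fin.prod_univ_succ]
        simp
      · rw [Set.indicator_of_notMem (fun h => ht ((lzS_cons m a b x t).1 h).2),
          Set.indicator_of_notMem ht, mul_zero]
    · rw [Set.indicator_of_notMem hx]
      rw [← integral_zero (Fin m → ℝ) ℂ]
      congr 1
      funext t
      rw [Set.indicator_of_notMem (fun h => hx ((lzS_cons m a b x t).1 h).1)]

/-- the alternating phases -/
noncomputable def lzφ (i : ℕ) (s : ℝ) : ℂ := Complex.exp (-Complex.I * ((-1) ^ i * (s : ℂ) ^ 2))

theorem lzφ_cont (i : ℕ) : Continuous (lzφ i) := by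
  unfold lzφ; fun_prop

theorem lzφ_shift : (fun i => lzφ (i + 1 + 1)) = lzφ := by
  funext i s
  simp [lzφ, pow_succ]

theorem lz_prod (n : ℕ) (s : Fin (2 * n) → ℝ) (p1 : ∀ k : Fin n, 2 * k.1 < 2 * n)
    (p2 : ∀ k : Fin n, 2 * k.1 + 1 < 2 * n) :
    Complex.exp (-Complex.I *
            (∑ k : Fin n,
              (((s ⟨2 * k.1, p1 k⟩ : ℝ) : ℂ) ^ 2 -
               ((s ⟨2 * k.1 + 1, p2 k⟩ : ℝ) : ℂ) ^ 2)))
    = ∏ i : Fin (2 * n), lzφ i (s i) := by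
  let u : ℕ → ℂ := fun i => if h : i < 2 * n then ((s ⟨i, h⟩ : ℝ) : ℂ) ^ 2 else 0
  have h1 : ∏ i : Fin (2 * n), lzφ i (s i)
      = ∏ i ∈ Finset.range (2 * n), Complex.exp (-Complex.I * ((-1) ^ i * u i)) := by
    rw [Finset.prod_range]
    apply Finset.prod_congr rfl
    intro i _
    simp [lzφ, u]
  have h2 : ∀ m, ∏ i ∈ Finset.range (2 * m), Complex.exp (-Complex.I * ((-1) ^ i * u i))
      = Complex.exp (-Complex.I * ∑ k ∈ Finset.range m, (u (2 * k) - u (2 * k + 1))) := by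
    intro m
    induction m with
    | zero => simp
    | succ m ih =>
      rw [show 2 * (m + 1) = 2 * m + 1 + 1 by ring, Finset.prod_range_succ, Finset.prod_range_succ,
        ih, Finset.sum_range_succ, ← Complex.exp_add, ← Complex.exp_add]
      congr 1
      simp [pow_succ, pow_mul]
      ring
  rw [h1, h2, Finset.sum_range]
  congr 2
  apply Finset.sum_congr rfl
  intro k _
  have hk := k.isLt
  have e1 : 2 * (k : ℕ) < 2 * n := by omega
  have e2 : 2 * (k : ℕ) + 1 < 2 * n := by omega
  simp [u, e1, e2]

theorem lzφ_zero (s : ℝ) : lzφ 0 s = Complex.exp (-Complex.I * (s ^ 2 : ℝ)) := by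
  simp [lzφ]

theorem lzφ_one (s : ℝ) : lzφ 1 s = Complex.exp (Complex.I * (s ^ 2 : ℝ)) := by
  simp [lzφ]

/-- The explicit solution. -/
noncomputable def lzΦ (a : ℝ) (k : ℕ) (L : ℝ) : ℂ :=
  ∫ Y in (0:ℝ)..L, Complex.exp (-Complex.I * ((2 * a + L) * Y : ℝ)) *
    (((L - Y) * lzG k ((L - Y) * Y) : ℝ) : ℂ)

theorem lz_ode (a : ℝ) (G A A1 A2 : ℝ → ℝ) (hG : Continuous G)
    (hA : ∀ z, HasDerivAt A (A1 z) z) (hA1 : ∀ z, HasDerivAt A1 (A2 z) z) (hA2 : Continuous A2)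
    (hGA : ∀ z, 0 ≤ z → z * G z = A z) (L : ℝ) (hL : 0 ≤ L) :
    ∫ Y in (0:ℝ)..L, Complex.exp (-Complex.I * ((2 * a + L) * Y : ℝ)) * (((L - Y) * G ((L - Y) * Y) : ℝ) : ℂ)
     = ∫ s in (0:ℝ)..L, lzφ 0 (a + s) * ∫ r in (0:ℝ)..s, lzφ 1 (a + r) * (A1 0 +
        ∫ Y in (0:ℝ)..r, Complex.exp (-Complex.I * ((2 * a + r) * Y : ℝ)) *
          (((r - Y) * (A2 ((r - Y) * Y) + A ((r - Y) * Y)) : ℝ) : ℂ)) := by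
  have hA1c : Continuous A1 := continuous_iff_continuousAt.2 fun z => (hA1 z).continuousAt
  rw [lz_step1 a G A A1 hG hA hA1c hGA L hL]
  apply intervalIntegral.integral_congr
  intro s hs
  rw [Set.uIcc_of_le hL] at hs
  have hA0 : A 0 = 0 := by rw [← hGA 0 le_rfl]; simp
  simp only [lzφ_one]
  rw [← lz_step2 a A A1 A2 hA hA1 hA2 hA0 s hs.1, lzφ_zero, ← mul_assoc, ← Complex.exp_add]
  simp

theorem lzW_two (a : ℝ) (m : ℕ) (L : ℝ) :
    lzW a (m + 2) lzφ (a + L) = ∫ s in (0:ℝ)..L, lzφ 0 (a + s) * ∫ r in (0:ℝ)..s, lzφ 1 (a + r) *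
      lzW a m lzφ (a + r) := by
  have sh : ∀ (f : ℝ → ℂ) (L : ℝ), ∫ s in a..(a + L), f s = ∫ s in (0:ℝ)..L, f (a + s) := by
    intro f L
    rw [intervalIntegral.integral_comp_add_left]; simp
  simp only [lzW]
  rw [sh]
  simp_rw [sh, lzφ_shift]

theorem lzW_eq_Φ (a : ℝ) (k : ℕ) (L : ℝ) (hL : 0 ≤ L) :
    lzW a (2 * (k + 1)) lzφ (a + L) = ((k + 1).factorial : ℂ)⁻¹ * lzΦ a k L := by
  induction k generalizing L with
  | zero =>
    rw [show 2 * (0 + 1) = 0 + 2 from rfl, lzW_two]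
    unfold lzΦ
    rw [lz_ode a (lzG 0) Real.sin Real.cos (fun z => - Real.sin z) (lzG_cont 0) Real.hasDerivAt_sin
      Real.hasDerivAt_cos (by fun_prop) (fun z _ => lz_mul_sinc z) L hL]
    simp [lzW]
  | succ k ih =>
    rw [show 2 * (k + 1 + 1) = 2 * (k + 1) + 2 from rfl, lzW_two]
    obtain ⟨A1, h0, h1, h2⟩ := lz_conv_sin_deriv (lzG_cont k)
    have hGc := lzG_cont k
    have hCc := lzC_cont Real.continuous_sin hGc
    have hode := lz_ode a (lzG (k+1)) (fun z => (k + 2) * lzC Real.sin (lzG k) z) (fun z => (k + 2) * A1 z)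
      (fun z => (k + 2) * (lzG k z - lzC Real.sin (lzG k) z)) (lzG_cont (k+1))
      (fun z => (h1 z).const_mul _) (fun z => (h2 z).const_mul _) (by fun_prop)
      (fun z hz => lz_mul_G_succ k z hz) L hL
    unfold lzΦ
    rw [hode, ← intervalIntegral.integral_const_mul]
    apply intervalIntegral.integral_congr
    intro s hs
    rw [Set.uIcc_of_le hL] at hs
    simp only
    rw [mul_left_comm]
    congr 1
    rw [← intervalIntegral.integral_const_mul]
    apply intervalIntegral.integral_congr
    intro r hr
    rw [Set.uIcc_of_le hs.1] at hr
    simp only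
    rw [mul_left_comm]
    congr 1
    rw [ih r hr.1, h0, mul_zero, Complex.ofReal_zero, zero_add]
    unfold lzΦ
    rw [← intervalIntegral.integral_const_mul, ← intervalIntegral.integral_const_mul]
    apply intervalIntegral.integral_congr
    intro Y _
    simp only
    rw [Nat.factorial_succ (k + 1)]
    have : ((k + 1).factorial : ℂ) ≠ 0 := by exact_mod_cast Nat.factorial_ne_zero _
    have h3 : (k : ℂ) + 1 + 1 ≠ 0 := by exact_mod_cast Nat.succ_ne_zero (k + 1)
    push_cast
    field_simp
    ring

theorem lz_main_formula (k : ℕ) (T : ℝ) (hT : 0 ≤ T) :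
    ∫ s in lzS (2 * (k + 1)) (-T) T, ∏ i : Fin (2 * (k + 1)), lzφ i (s i)
      = (((k + 1).factorial : ℝ)⁻¹ * ∫ Y in (0:ℝ)..(2 * T), (2 * T - Y) * lzG k ((2 * T - Y) * Y) : ℝ) := by
  rw [lzW_eq _ _ _ (by linarith) _ lzφ_cont]
  have := lzW_eq_Φ (-T) k (2 * T) (by linarith)
  rw [show -T + 2 * T = T by ring] at this
  rw [this, lzΦ]
  push_cast
  rw [← intervalIntegral.integral_ofReal]
  congr 1
  apply intervalIntegral.integral_congr
  intro Y _
  simp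

def lzDecay (f : ℝ → ℝ) : Prop :=
  ∀ a : ℝ, 0 < a → a < 1 → ∃ C : ℝ, 0 ≤ C ∧ ∀ z, 0 ≤ z → |f z| ≤ C * (1 + z) ^ (-a)

theorem lzDecay_of_inv {f : ℝ → ℝ} (C : ℝ) (h : ∀ z, 0 ≤ z → (1 + z) * |f z| ≤ C) : lzDecay f := by
  intro a ha ha1
  have hC : 0 ≤ C := le_trans (by positivity) (h 0 le_rfl)
  refine ⟨C, hC, fun z hz => ?_⟩
  have h1 : |f z| ≤ C * (1 + z) ^ (-1 : ℝ) := by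
    rw [Real.rpow_neg_one, ← div_eq_mul_inv, le_div_iff₀ (by linarith)]
    linarith [h z hz]
  refine h1.trans (mul_le_mul_of_nonneg_left ?_ hC)
  exact Real.rpow_le_rpow_of_exponent_le (by linarith) (by linarith)

theorem lzDecay.add {f g : ℝ → ℝ} (hf : lzDecay f) (hg : lzDecay g) :
    lzDecay (fun z => f z + g z) := by
  intro a ha ha1
  obtain ⟨C, hC, h1⟩ := hf a ha ha1
  obtain ⟨D, hD, h2⟩ := hg a ha ha1
  refine ⟨C + D, by linarith, fun z hz => ?_⟩
  have := abs_add_le (f z) (g z)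
  rw [add_mul]
  linarith [h1 z hz, h2 z hz]

theorem lzDecay.const_mul {f : ℝ → ℝ} (hf : lzDecay f) (c : ℝ) : lzDecay (fun z => c * f z) := by
  intro a ha ha1
  obtain ⟨C, hC, h1⟩ := hf a ha ha1
  refine ⟨|c| * C, by positivity, fun z hz => ?_⟩
  rw [abs_mul, mul_assoc]
  exact mul_le_mul_of_nonneg_left (h1 z hz) (abs_nonneg c)

theorem lzDecay.congr {f g : ℝ → ℝ} (hf : lzDecay f) (h : ∀ z, 0 ≤ z → g z = f z) : lzDecay g := by
  intro a ha ha1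
  obtain ⟨C, hC, h1⟩ := hf a ha ha1
  exact ⟨C, hC, fun z hz => by rw [h z hz]; exact h1 z hz⟩

theorem lz_int_rpow (a z : ℝ) (ha1 : a < 1) (hz : 0 ≤ z) :
    IntervalIntegrable (fun y : ℝ => (1 + y) ^ (-a)) volume 0 z ∧
    ∫ y in (0:ℝ)..z, (1 + y) ^ (-a) ≤ (1 + z) ^ (1 - a) / (1 - a) := by
  have hc : ContinuousOn (fun y : ℝ => (1 + y) ^ (-a)) (Set.uIcc 0 z) := by
    rw [Set.uIcc_of_le hz]
    intro y hy
    have : (1 + y) ≠ 0 := by linarith [hy.1]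
    exact ((continuousAt_const.add continuousAt_id).rpow_const (Or.inl this)).continuousWithinAt
  refine ⟨hc.intervalIntegrable, ?_⟩
  have h := intervalIntegral.integral_eq_sub_of_hasDerivAt (a := 0) (b := z)
    (f := fun y : ℝ => (1 + y) ^ (1 - a) / (1 - a)) (f' := fun y : ℝ => (1 + y) ^ (-a)) (by
      intro y hy
      rw [Set.uIcc_of_le hz] at hy
      have h1 : (1 + y) ≠ 0 := by linarith [hy.1]
      have h2 : (1 - a) ≠ 0 := by linarith
      have h3 : HasDerivAt (fun y : ℝ => 1 + y) 1 y := (hasDerivAt_id y).const_add 1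
      have := (h3.rpow_const (p := 1 - a) (Or.inl h1)).div_const (1 - a)
      refine this.congr_deriv ?_
      rw [show 1 - a - 1 = -a by ring]
      field_simp) hc.intervalIntegrable
  rw [h]
  have : 0 ≤ (1 + (0:ℝ)) ^ (1 - a) / (1 - a) := by
    apply div_nonneg (by positivity) (by linarith)
  linarith

theorem lz_pow_prod (a u v : ℝ) (ha : 0 < a) (hu : 0 < u) (hv : 0 < v) :
    u ^ (-a) * v ^ (-a) ≤ ((u + v) / 2) ^ (-a) * (u ^ (-a) + v ^ (-a)) := by
  wlog h : u ≤ v generalizing u v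
  · have := this v u hv hu (le_of_not_ge h)
    rw [add_comm u v, add_comm (u ^ (-a))]
    linarith
  · have h1 : v ^ (-a) ≤ ((u + v) / 2) ^ (-a) :=
      Real.rpow_le_rpow_of_nonpos (by linarith) (by linarith) (by linarith)
    have hu' : 0 ≤ u ^ (-a) := by positivity
    have hv' : 0 ≤ v ^ (-a) := by positivity
    have hw' : 0 ≤ ((u + v) / 2) ^ (-a) := by positivity
    nlinarith [mul_le_mul_of_nonneg_left h1 hu', mul_nonneg hw' hv']

theorem lzDecay_conv {f h : ℝ → ℝ} (hf : lzDecay f) (hh : lzDecay h) : lzDecay (lzC f h) := by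
  intro a ha ha1
  obtain ⟨C, hC, h1⟩ := hf ((1 + a) / 2) (by linarith) (by linarith)
  obtain ⟨D, hD, h2⟩ := hh ((1 + a) / 2) (by linarith) (by linarith)
  set b := (1 + a) / 2 with hb
  refine ⟨C * D * (2 ^ b * (2 / (1 - b))), ?_, fun z hz => ?_⟩
  · have : 0 < 1 - b := by rw [hb]; linarith
    positivity
  obtain ⟨i1, i2⟩ := lz_int_rpow b z (by rw [hb]; linarith) hz
  have i3 : IntervalIntegrable (fun y : ℝ => (1 + (z - y)) ^ (-b)) volume 0 z := by
    have := (i1.comp_sub_left z).symm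
    simpa using this
  have i4 : ∫ y in (0:ℝ)..z, (1 + (z - y)) ^ (-b) = ∫ y in (0:ℝ)..z, (1 + y) ^ (-b) := by
    rw [intervalIntegral.integral_comp_sub_left (fun y => (1 + y) ^ (-b)) z]; simp
  have hp : (0:ℝ) < (1 + z) := by linarith
  have bound : ‖lzC f h z‖ ≤ ∫ y in (0:ℝ)..z,
      C * D * (2 ^ b * (1 + z) ^ (-b)) * ((1 + (z - y)) ^ (-b) + (1 + y) ^ (-b)) := by
    unfold lzC
    apply intervalIntegral.norm_integral_le_of_norm_le hz
    · refine Filter.Eventually.of_forall fun y hy => ?_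
      have hy0 : 0 < 1 + y := by linarith [hy.1]
      have hy1 : 0 < 1 + (z - y) := by linarith [hy.2]
      have k1 := h1 (z - y) (by linarith [hy.2])
      have k2 := h2 y hy.1.le
      have k3 := lz_pow_prod b (1 + (z - y)) (1 + y) (by rw [hb]; linarith) hy1 hy0
      have k4 : ((1 + (z - y) + (1 + y)) / 2) ^ (-b) ≤ 2 ^ b * (1 + z) ^ (-b) := by
        have : (2:ℝ) ^ b * (1 + z) ^ (-b) = ((1 + z) / 2) ^ (-b) := by
          rw [Real.div_rpow hp.le (by norm_num), Real.rpow_neg (by norm_num : (0:ℝ) ≤ 2)]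
          field_simp
        rw [this]
        apply Real.rpow_le_rpow_of_nonpos <;> linarith
      rw [norm_mul, Real.norm_eq_abs, Real.norm_eq_abs]
      calc |f (z - y)| * |h y| ≤ (C * (1 + (z - y)) ^ (-b)) * (D * (1 + y) ^ (-b)) := by
            apply mul_le_mul k1 k2 (abs_nonneg _) (by positivity)
        _ = C * D * ((1 + (z - y)) ^ (-b) * (1 + y) ^ (-b)) := by ring
        _ ≤ C * D * ((2 ^ b * (1 + z) ^ (-b)) * ((1 + (z - y)) ^ (-b) + (1 + y) ^ (-b))) := by
            apply mul_le_mul_of_nonneg_left _ (by positivity)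
            exact k3.trans (mul_le_mul_of_nonneg_right k4 (by positivity))
        _ = _ := by ring
    · exact (i3.add i1).const_mul _
  rw [Real.norm_eq_abs] at bound
  refine bound.trans ?_
  rw [intervalIntegral.integral_const_mul, intervalIntegral.integral_add i3 i1, i4]
  have e : (1 + z) ^ (-a) = (1 + z) ^ (-b) * (1 + z) ^ (1 - b) := by
    rw [← Real.rpow_add hp]; congr 1; rw [hb]; ring
  rw [e]
  have hq : 0 ≤ C * D * (2 ^ b * (1 + z) ^ (-b)) := by positivity
  calc _ ≤ C * D * (2 ^ b * (1 + z) ^ (-b)) * ((1 + z) ^ (1 - b) / (1 - b) + (1 + z) ^ (1 - b) / (1 - b)) := by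
        apply mul_le_mul_of_nonneg_left _ hq; linarith
    _ = _ := by ring

theorem lzDecay_sinc : lzDecay Real.sinc := by
  apply lzDecay_of_inv 2
  intro z hz
  have h1 := Real.abs_sinc_le_one z
  have h2 : z * |Real.sinc z| ≤ 1 := by
    have h3 := Real.abs_sin_le_one z
    rwa [← lz_mul_sinc, abs_mul, abs_of_nonneg hz] at h3
  linarith

theorem lzDecay_G (k : ℕ) : lzDecay (lzG k) := by
  induction k with
  | zero => exact lzDecay_sinc
  | succ k ih => exact lzDecay_conv lzDecay_sinc ih

/-- Sine integral: formula and rate. -/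
theorem lz_si (z : ℝ) (hz : 0 < z) : |(∫ y in (0:ℝ)..z, Real.sinc y) - π / 2| ≤ 2 / z := by
  have hexp : ∀ y : ℝ, 0 < y → IntegrableOn (fun t : ℝ => Real.exp (-(y * t))) (Set.Ioi 0) := by
    intro y hy
    have := exp_neg_integrableOn_Ioi 0 hy
    simpa using this
  have hexpv : ∀ y : ℝ, 0 < y → ∫ t in Set.Ioi (0:ℝ), Real.exp (-(y * t)) = 1 / y := by
    intro y hy
    have := integral_exp_mul_Ioi (a := -y) (by linarith) 0
    simp only [neg_mul, mul_zero, neg_zero, Real.exp_zero] at this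
    rw [this]; field_simp
  -- Fubini
  have hint : Integrable (Function.uncurry fun (y t : ℝ) => Real.sin y * Real.exp (-(y * t)))
      ((volume.restrict (Set.uIoc 0 z)).prod (volume.restrict (Set.Ioi 0))) := by
    rw [integrable_prod_iff]
    · constructor
      · rw [ae_restrict_iff' measurableSet_uIoc]
        refine Filter.Eventually.of_forall fun y hy => ?_
        rw [Set.uIoc_of_le hz.le] at hy
        exact (hexp y hy.1).const_mul (Real.sin y)
      · have : IntegrableOn (fun y => |Real.sinc y|) (Set.uIoc 0 z) := by
          apply IntegrableOn.mono_set _ Set.uIoc_subset_uIcc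
          exact (lz_continuous_sinc.abs).continuousOn.integrableOn_compact isCompact_uIcc
        refine this.congr_fun (fun y hy => ?_) measurableSet_uIoc
        rw [Set.uIoc_of_le hz.le] at hy
        simp only [Function.uncurry, norm_mul, Real.norm_eq_abs, Real.abs_exp]
        rw [integral_const_mul, hexpv y hy.1, Real.sinc_of_ne_zero hy.1.ne', abs_div, abs_of_pos hy.1]
        ring
    · apply Continuous.aestronglyMeasurable
      fun_prop
  have hsw := intervalIntegral_integral_swap hint
  have hl : ∫ y in (0:ℝ)..z, ∫ t in Set.Ioi (0:ℝ), Real.sin y * Real.exp (-(y * t))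
      = ∫ y in (0:ℝ)..z, Real.sinc y := by
    rw [intervalIntegral.integral_of_le hz.le, intervalIntegral.integral_of_le hz.le]
    apply setIntegral_congr_fun measurableSet_Ioc
    intro y hy
    simp only
    rw [integral_const_mul, hexpv y hy.1, Real.sinc_of_ne_zero hy.1.ne']
    ring
  let r : ℝ → ℝ := fun t => Real.exp (-(z * t)) * (Real.cos z + t * Real.sin z) / (1 + t ^ 2)
  have hin : ∀ t : ℝ, ∫ y in (0:ℝ)..z, Real.sin y * Real.exp (-(y * t)) = (1 + t ^ 2)⁻¹ - r t := by
    intro t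
    have ht : (1 + t ^ 2) ≠ 0 := by positivity
    have := intervalIntegral.integral_eq_sub_of_hasDerivAt (a := 0) (b := z)
      (f := fun y : ℝ => -(Real.exp (-(y * t)) * (Real.cos y + t * Real.sin y)) / (1 + t ^ 2))
      (f' := fun y => Real.sin y * Real.exp (-(y * t))) (by
        intro y _
        have h1 : HasDerivAt (fun y : ℝ => Real.exp (-(y * t))) (Real.exp (-(y * t)) * (-(1 * t))) y :=
          (((hasDerivAt_id y).mul_const t).neg).exp
        have h2 : HasDerivAt (fun y : ℝ => Real.cos y + t * Real.sin y) (-Real.sin y + t * Real.cos y) y :=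
          (Real.hasDerivAt_cos y).add ((Real.hasDerivAt_sin y).const_mul t)
        have := ((h1.mul h2).neg).div_const (1 + t ^ 2)
        refine this.congr_deriv ?_
        field_simp
        ring) (by apply Continuous.intervalIntegrable; fun_prop)
    rw [this]
    simp only [r, zero_mul, neg_zero, Real.exp_zero, Real.cos_zero, Real.sin_zero, mul_zero]
    field_simp
    ring
  have hrb : ∀ t ∈ Set.Ioi (0:ℝ), ‖r t‖ ≤ 2 * Real.exp (-(z * t)) := by
    intro t ht
    have ht0 : (0:ℝ) < t := ht
    have hp : 0 < 1 + t ^ 2 := by positivity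
    simp only [r, norm_div, norm_mul, Real.norm_eq_abs, Real.abs_exp, abs_of_pos hp]
    rw [div_le_iff₀ hp]
    have h1 : |Real.cos z + t * Real.sin z| ≤ 1 + t := by
      have := abs_add_le (Real.cos z) (t * Real.sin z)
      rw [abs_mul, abs_of_pos ht0] at this
      nlinarith [Real.abs_cos_le_one z, Real.abs_sin_le_one z]
    have h2 : 1 + t ≤ 2 * (1 + t ^ 2) := by nlinarith [sq_nonneg (t - 1)]
    have := mul_le_mul_of_nonneg_left (h1.trans h2) (Real.exp_pos (-(z * t))).le
    linarith
  have hrint : IntegrableOn r (Set.Ioi 0) := by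
    apply Integrable.mono' ((hexp z hz).const_mul 2)
    · apply Continuous.aestronglyMeasurable
      simp only [r]
      apply Continuous.div
      · fun_prop
      · fun_prop
      · intro t; positivity
    · rw [ae_restrict_iff' measurableSet_Ioi]
      exact Filter.Eventually.of_forall hrb
  rw [hl] at hsw
  simp only [hin] at hsw
  rw [hsw, integral_sub integrable_inv_one_add_sq.integrableOn hrint, integral_Ioi_inv_one_add_sq,
    Real.arctan_zero, sub_zero, sub_sub_cancel_left, abs_neg, ← Real.norm_eq_abs]
  refine (norm_integral_le_of_norm_le ((hexp z hz).const_mul 2)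
    ((ae_restrict_iff' measurableSet_Ioi).2 (Filter.Eventually.of_forall hrb))).trans ?_
  rw [integral_const_mul, hexpv z hz]
  apply le_of_eq; ring

noncomputable def lzH (k : ℕ) (z : ℝ) : ℝ := ∫ y in (0:ℝ)..z, lzG k y

theorem lzH_eq_conv (k : ℕ) : lzH k = lzC (fun _ => 1) (lzG k) := by
  funext z; simp [lzH, lzC]

theorem lzH_cont (k : ℕ) : Continuous (lzH k) := by
  rw [lzH_eq_conv]; exact lzC_cont continuous_const (lzG_cont k)

theorem lzH_deriv (k : ℕ) (z : ℝ) : HasDerivAt (lzH k) (lzG k z) z :=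
  intervalIntegral.integral_hasDerivAt_right
      ((lzG_cont k).intervalIntegrable _ _)
      (lzG_cont k).aestronglyMeasurable.stronglyMeasurableAtFilter
      (lzG_cont k).continuousAt

theorem lzDecay_H0 : lzDecay (fun z => lzH 0 z - π / 2) := by
  apply lzDecay_of_inv 8
  intro z hz
  have hpi := Real.pi_lt_four
  have hpi0 := Real.pi_pos
  by_cases h : z ≤ 1
  · have h1 : ‖∫ y in (0:ℝ)..z, Real.sinc y‖ ≤ 1 * |z - 0| := by
      apply intervalIntegral.norm_integral_le_of_norm_le_const
      intro y _
      exact Real.abs_sinc_le_one y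
    rw [Real.norm_eq_abs, sub_zero, abs_of_nonneg hz, one_mul] at h1
    have h2 : |lzH 0 z - π / 2| ≤ 4 := by
      change |(∫ y in (0:ℝ)..z, Real.sinc y) - π / 2| ≤ 4
      rw [abs_le] at h1 ⊢
      constructor <;> linarith
    nlinarith [abs_nonneg (lzH 0 z - π / 2)]
  · push Not at h
    have h1 : |lzH 0 z - π / 2| ≤ 2 / z := lz_si z (by linarith)
    rw [le_div_iff₀ (by linarith)] at h1
    nlinarith [abs_nonneg (lzH 0 z - π / 2)]

theorem lzDecay_H (k : ℕ) : lzDecay (fun z => lzH k z - (π / 2) ^ (k + 1)) := by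
  induction k with
  | zero => simpa using lzDecay_H0
  | succ k ih =>
    have h := (lzDecay_conv lzDecay_sinc ih).add (lzDecay_H0.const_mul ((π / 2) ^ (k + 1)))
    refine h.congr fun z hz => ?_
    have e1 : lzH (k + 1) z = lzC Real.sinc (lzH k) z := by
      rw [lzH_eq_conv, lzH_eq_conv]
      exact lzC_left_comm continuous_const lz_continuous_sinc (lzG_cont k) z hz
    have e2 : lzH 0 z = ∫ y in (0:ℝ)..z, Real.sinc (z - y) := by
      rw [intervalIntegral.integral_comp_sub_left (fun y => Real.sinc y) z]
      simp [lzH, lzG]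
    have hs := lz_continuous_sinc
    have hH := lzH_cont k
    have e3 : lzC Real.sinc (lzH k) z = lzC Real.sinc (fun z => lzH k z - (π / 2) ^ (k + 1)) z
        + (π / 2) ^ (k + 1) * lzH 0 z := by
      rw [e2]
      unfold lzC
      rw [← intervalIntegral.integral_const_mul, ← intervalIntegral.integral_add]
      · apply intervalIntegral.integral_congr
        intro y _
        simp only
        ring
      · apply Continuous.intervalIntegrable; fun_prop
      · apply Continuous.intervalIntegrable; fun_prop
    rw [e1, e3]
    ring

theorem lz_limit_bound (G H : ℝ → ℝ) (c C : ℝ) (hC : 0 ≤ C) (hG : Continuous G)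
    (hH : ∀ z, HasDerivAt H (G z) z) (H0 : H 0 = 0)
    (hGb : ∀ z, 0 ≤ z → |G z| ≤ C * (1 + z) ^ (-(3/4) : ℝ))
    (hHb : ∀ z, 0 ≤ z → |H z - c| ≤ C * (1 + z) ^ (-(3/4) : ℝ)) (T : ℝ) (hT : 2 ≤ T) :
    |(∫ Y in (0:ℝ)..(2 * T), (2 * T - Y) * G ((2 * T - Y) * Y)) - c| ≤ 50 * C / √T := by
  have hHc : Continuous H := continuous_iff_continuousAt.2 fun z => (hH z).continuousAt
  have hT0 : 0 < T := by linarith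
  have hsT : 0 < √T := Real.sqrt_pos.2 hT0
  have hsq : √T * √T = T := Real.mul_self_sqrt hT0.le
  have hs1 : 1 ≤ √T := by
    rw [Real.one_le_sqrt]; linarith
  -- reduction to `[0, T]`
  have hfc : Continuous fun Y => G ((2 * T - Y) * Y) := by fun_prop
  have e1 : ∫ Y in (0:ℝ)..(2 * T), (2 * T - Y) * G ((2 * T - Y) * Y)
      = ∫ Y in (0:ℝ)..T, 2 * T * G ((2 * T - Y) * Y) := by
    rw [← intervalIntegral.integral_add_adjacent_intervals (b := T)]
    · have := intervalIntegral.integral_comp_sub_left (a := 0) (b := T)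
        (fun Y => (2 * T - Y) * G ((2 * T - Y) * Y)) (2 * T)
      rw [show 2 * T - T = T by ring, sub_zero] at this
      rw [← this, ← intervalIntegral.integral_add]
      · apply intervalIntegral.integral_congr
        intro Y _
        simp only [sub_sub_cancel]
        rw [mul_comm Y (2 * T - Y)]
        ring
      · apply Continuous.intervalIntegrable; fun_prop
      · apply Continuous.intervalIntegrable; fun_prop
    · apply Continuous.intervalIntegrable; fun_prop
    · apply Continuous.intervalIntegrable; fun_prop
  have hzd : ∀ Y : ℝ, HasDerivAt (fun Y : ℝ => (2 * T - Y) * Y) (2 * T - 2 * Y) Y := by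
    intro Y
    have := ((hasDerivAt_id Y).const_sub (2 * T)).mul (hasDerivAt_id Y)
    refine this.congr_deriv ?_
    simp; ring
  have hDd : ∀ Y : ℝ, HasDerivAt (fun Y : ℝ => H ((2 * T - Y) * Y) - c)
      (G ((2 * T - Y) * Y) * (2 * T - 2 * Y)) Y := fun Y =>
    (HasDerivAt.comp (h := fun Y : ℝ => (2 * T - Y) * Y) Y (hH ((2 * T - Y) * Y)) (hzd Y)).sub_const c
  have e2 : ∫ Y in (0:ℝ)..T, G ((2 * T - Y) * Y) * (2 * T - 2 * Y) = H (T ^ 2) := by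
    rw [intervalIntegral.integral_eq_sub_of_hasDerivAt (fun Y _ => hDd Y)
      (by apply Continuous.intervalIntegrable; fun_prop)]
    simp only [mul_zero, H0]
    rw [show (2 * T - T) * T = T ^ 2 by ring]
    ring
  have e3 : ∫ Y in (0:ℝ)..T, 2 * T * G ((2 * T - Y) * Y)
      = H (T ^ 2) + ((∫ Y in (0:ℝ)..(T - 1), 2 * Y * G ((2 * T - Y) * Y))
        + ∫ Y in (T - 1)..T, 2 * Y * G ((2 * T - Y) * Y)) := by
    rw [intervalIntegral.integral_add_adjacent_intervals, ← e2, ← intervalIntegral.integral_add]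
    · apply intervalIntegral.integral_congr
      intro Y _
      simp only
      ring
    · apply Continuous.intervalIntegrable; fun_prop
    · apply Continuous.intervalIntegrable; fun_prop
    · apply Continuous.intervalIntegrable; fun_prop
    · apply Continuous.intervalIntegrable; fun_prop
  -- decay for large Y
  have big : ∀ z : ℝ, T ^ 2 / 2 ≤ z → (1 + z) ^ (-(3/4) : ℝ) ≤ 2 / (T * √T) := by
    intro z hz
    have hz0 : 0 < 1 + z := by nlinarith
    rw [Real.rpow_neg hz0.le, ← one_div, div_le_div_iff₀ (by positivity) (by positivity), one_mul]
    have hx : 0 ≤ (1 + z) ^ (3/4 : ℝ) := by positivity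
    have hx4 : ((1 + z) ^ (3/4 : ℝ)) ^ 4 = (1 + z) ^ 3 := by
      rw [← Real.rpow_natCast, ← Real.rpow_mul hz0.le, ← Real.rpow_natCast]
      norm_num
    have h4 : (T * √T) ^ 4 ≤ (2 * (1 + z) ^ (3/4 : ℝ)) ^ 4 := by
      rw [mul_pow 2, hx4]
      have : (T * √T) ^ 4 = (T ^ 2) ^ 3 := by
        calc (T * √T) ^ 4 = T ^ 4 * (√T * √T) ^ 2 := by ring
          _ = _ := by rw [hsq]; ring
      rw [this]
      have h5 : T ^ 2 ≤ 2 * (1 + z) := by linarith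
      have h6 : (T ^ 2) ^ 3 ≤ (2 * (1 + z)) ^ 3 := pow_le_pow_left₀ (by positivity) h5 3
      have h7 : (0:ℝ) ≤ (1 + z) ^ 3 := by positivity
      nlinarith
    exact le_of_pow_le_pow_left₀ (by norm_num) (by positivity) h4
  have hzT : ∀ Y, T / 2 ≤ Y → Y ≤ T → T ^ 2 / 2 ≤ (2 * T - Y) * Y := by
    intro Y h1 h2
    nlinarith
  have hzY : ∀ Y, 0 ≤ Y → Y ≤ T → Y ≤ (2 * T - Y) * Y := by
    intro Y h1 h2
    nlinarith
  -- term 1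
  have b1 : |H (T ^ 2) - c| ≤ 2 * C / √T := by
    refine (hHb (T ^ 2) (by positivity)).trans ?_
    have := mul_le_mul_of_nonneg_left (big (T ^ 2) (by nlinarith)) hC
    refine this.trans ?_
    rw [← mul_div_assoc, mul_comm C 2]
    apply div_le_div_of_nonneg_left (by positivity) hsT
    nlinarith
  -- term 3
  have hTs : T * (2 / (T * √T)) = 2 / √T := by field_simp
  have b3 : |∫ Y in (T - 1)..T, 2 * Y * G ((2 * T - Y) * Y)| ≤ 4 * C / √T := by
    rw [← Real.norm_eq_abs]
    have := intervalIntegral.norm_integral_le_of_norm_le_const (a := T - 1) (b := T)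
      (f := fun Y => 2 * Y * G ((2 * T - Y) * Y)) (C := 4 * C / √T) (by
        intro Y hY
        rw [Set.uIoc_of_le (by linarith)] at hY
        have hY0 : 0 ≤ Y := by linarith [hY.1]
        have h1 := hzT Y (by linarith [hY.1]) hY.2
        have h2 := (hGb _ (le_trans (by positivity) h1)).trans
          (mul_le_mul_of_nonneg_left (big _ h1) hC)
        rw [Real.norm_eq_abs, abs_mul, abs_of_nonneg (by linarith : 0 ≤ 2 * Y)]
        calc 2 * Y * |G ((2 * T - Y) * Y)| ≤ 2 * T * (C * (2 / (T * √T))) := by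
              apply mul_le_mul (by linarith [hY.2]) h2 (abs_nonneg _) (by linarith)
          _ = 2 * C * (T * (2 / (T * √T))) := by ring
          _ = _ := by rw [hTs]; ring)
    simpa using this
  -- term 2
  have hw : ∀ Y ∈ Set.uIcc 0 (T - 1), HasDerivAt (fun Y : ℝ => Y / (T - Y)) (T / (T - Y) ^ 2) Y := by
    intro Y hY
    rw [Set.uIcc_of_le (by linarith)] at hY
    have hne : T - Y ≠ 0 := by linarith [hY.2]
    have := (hasDerivAt_id Y).div ((hasDerivAt_id Y).const_sub T) hne
    refine this.congr_deriv ?_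
    simp
  have cw : ContinuousOn (fun Y : ℝ => ((T - Y) ^ 2)⁻¹) (Set.uIcc 0 (T - 1)) := by
    apply ContinuousOn.inv₀ (by fun_prop)
    intro Y hY
    rw [Set.uIcc_of_le (by linarith)] at hY
    have : 0 < T - Y := by linarith [hY.2]
    positivity
  have cw' : ContinuousOn (fun Y : ℝ => T / (T - Y) ^ 2) (Set.uIcc 0 (T - 1)) := by
    simp only [div_eq_mul_inv]
    exact continuousOn_const.mul cw
  have parts := intervalIntegral.integral_mul_deriv_eq_deriv_mul (a := 0) (b := T - 1)
    (u := fun Y => Y / (T - Y)) (v := fun Y => H ((2 * T - Y) * Y) - c)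
    (u' := fun Y => T / (T - Y) ^ 2) (v' := fun Y => G ((2 * T - Y) * Y) * (2 * T - 2 * Y))
    hw (fun Y _ => hDd Y) cw'.intervalIntegrable
    (by apply Continuous.intervalIntegrable; fun_prop)
  have e4 : ∫ Y in (0:ℝ)..(T - 1), 2 * Y * G ((2 * T - Y) * Y)
      = ∫ Y in (0:ℝ)..(T - 1), Y / (T - Y) * (G ((2 * T - Y) * Y) * (2 * T - 2 * Y)) := by
    apply intervalIntegral.integral_congr
    intro Y hY
    rw [Set.uIcc_of_le (by linarith)] at hY
    have hne : T - Y ≠ 0 := by linarith [hY.2]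
    simp only
    field_simp
  have b21 : |(T - 1) * (H ((2 * T - (T - 1)) * (T - 1)) - c)| ≤ 2 * C / √T := by
    have h1 := hzT (T - 1) (by linarith) (by linarith)
    have h2 := (hHb _ (le_trans (by positivity) h1)).trans
          (mul_le_mul_of_nonneg_left (big _ h1) hC)
    rw [abs_mul, abs_of_nonneg (by linarith : 0 ≤ T - 1)]
    calc (T - 1) * _ ≤ T * (C * (2 / (T * √T))) := by
          apply mul_le_mul (by linarith) h2 (abs_nonneg _) (by linarith)
      _ = C * (T * (2 / (T * √T))) := by ring
      _ = _ := by rw [hTs]; ring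
  obtain ⟨i1, i2⟩ := lz_int_rpow (3/4) (T - 1) (by norm_num) (by linarith)
  have i3 : ∫ Y in (0:ℝ)..(T - 1), ((T - Y) ^ 2)⁻¹ ≤ 1 := by
    rw [intervalIntegral.integral_eq_sub_of_hasDerivAt (f := fun Y : ℝ => (T - Y)⁻¹) _
      cw.intervalIntegrable]
    · simp only [sub_sub_cancel, inv_one, sub_zero]
      have : 0 < T⁻¹ := by positivity
      linarith
    · intro Y hY
      rw [Set.uIcc_of_le (by linarith)] at hY
      have hne : T - Y ≠ 0 := by linarith [hY.2]
      have := ((hasDerivAt_id Y).const_sub T).inv hne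
      refine this.congr_deriv ?_
      simp
  have b22 : |∫ Y in (0:ℝ)..(T - 1), T / (T - Y) ^ 2 * (H ((2 * T - Y) * Y) - c)| ≤ 40 * C / √T := by
    rw [← Real.norm_eq_abs]
    have hb := intervalIntegral.norm_integral_le_of_norm_le (a := 0) (b := T - 1) (μ := volume)
      (f := fun Y => T / (T - Y) ^ 2 * (H ((2 * T - Y) * Y) - c))
      (g := fun Y => 4 * C / T * (1 + Y) ^ (-(3/4) : ℝ) + 2 * C / √T * ((T - Y) ^ 2)⁻¹) (by linarith) (by
        refine Filter.Eventually.of_forall fun Y hY => ?_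
        have hY0 : 0 ≤ Y := hY.1.le
        have hp : 0 < T - Y := by linarith [hY.2]
        rw [Real.norm_eq_abs, abs_mul, abs_of_nonneg (by positivity : 0 ≤ T / (T - Y) ^ 2)]
        have p1 : 0 ≤ 4 * C / T * (1 + Y) ^ (-(3/4) : ℝ) := by positivity
        have p2 : 0 ≤ 2 * C / √T * ((T - Y) ^ 2)⁻¹ := by positivity
        rcases le_total (T / 2) Y with h | h
        · have h1 := hzT Y h (by linarith)
          have h2 := (hHb _ (le_trans (by positivity) h1)).trans
            (mul_le_mul_of_nonneg_left (big _ h1) hC)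
          have h3 := mul_le_mul_of_nonneg_left h2 (by positivity : 0 ≤ T / (T - Y) ^ 2)
          have h4 : T / (T - Y) ^ 2 * (C * (2 / (T * √T))) = 2 * C / √T * ((T - Y) ^ 2)⁻¹ := by
            field_simp
          linarith
        · have h1 := hzY Y hY0 (by linarith)
          have h2 := hHb _ (le_trans hY0 h1)
          have h3 : (1 + (2 * T - Y) * Y) ^ (-(3/4) : ℝ) ≤ (1 + Y) ^ (-(3/4) : ℝ) :=
            Real.rpow_le_rpow_of_nonpos (by linarith) (by linarith) (by norm_num)
          have h4 : T / (T - Y) ^ 2 ≤ 4 / T := by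
            rw [div_le_div_iff₀ (by positivity) hT0]
            nlinarith
          have h5 := mul_le_mul h4 (h2.trans (mul_le_mul_of_nonneg_left h3 hC)) (abs_nonneg _)
            (by positivity)
          have h6 : 4 / T * (C * (1 + Y) ^ (-(3/4) : ℝ)) = 4 * C / T * (1 + Y) ^ (-(3/4) : ℝ) := by ring
          linarith)
      ((i1.const_mul _).add (cw.intervalIntegrable.const_mul _))
    refine hb.trans ?_
    rw [intervalIntegral.integral_add (i1.const_mul _) (cw.intervalIntegrable.const_mul _),
      intervalIntegral.integral_const_mul, intervalIntegral.integral_const_mul]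
    have j1 : (1 + (T - 1)) ^ (1 - 3/4 : ℝ) / (1 - 3/4) ≤ 4 * √T := by
      rw [Real.sqrt_eq_rpow]
      have : (1 + (T - 1)) ^ (1 - 3/4 : ℝ) ≤ T ^ (1/2 : ℝ) := by
        rw [show 1 + (T - 1) = T by ring]
        exact Real.rpow_le_rpow_of_exponent_le (by linarith) (by norm_num)
      rw [div_le_iff₀ (by norm_num)]
      calc _ ≤ T ^ (1/2 : ℝ) := this
        _ = 4 * T ^ (1/2 : ℝ) * (1 - 3/4) := by ring
    have j2 := mul_le_mul_of_nonneg_left (i2.trans j1) (by positivity : 0 ≤ 4 * C / T)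
    have j3 := mul_le_mul_of_nonneg_left i3 (by positivity : 0 ≤ 2 * C / √T)
    have j4 : 4 * C / T * (4 * √T) = 16 * C / √T := by
      rw [div_mul_eq_mul_div, div_eq_div_iff hT0.ne' hsT.ne']
      linear_combination (16 * C) * hsq
    have j5 : 0 ≤ C / √T := by positivity
    rw [j4] at j2
    have j6 : 40 * C / √T = 40 * (C / √T) := by ring
    have j7 : 16 * C / √T = 16 * (C / √T) := by ring
    have j8 : 2 * C / √T = 2 * (C / √T) := by ring
    rw [j6]; rw [j7] at j2; rw [j8] at j3 ⊢
    linarith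
  rw [e1, e3, e4, parts]
  simp only [sub_sub_cancel, div_one, zero_div, zero_mul, sub_zero]
  set X := ∫ Y in (0:ℝ)..(T - 1), T / (T - Y) ^ 2 * (H ((2 * T - Y) * Y) - c)
  set Z := ∫ Y in (T - 1)..T, 2 * Y * G ((2 * T - Y) * Y)
  have j6 : 40 * C / √T = 40 * (C / √T) := by ring
  have j7 : 4 * C / √T = 4 * (C / √T) := by ring
  have j8 : 2 * C / √T = 2 * (C / √T) := by ring
  have j9 : 50 * C / √T = 50 * (C / √T) := by ring
  have j5 : 0 ≤ C / √T := by positivity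
  rw [j6] at b22
  rw [j7] at b3
  rw [j8] at b1 b21
  rw [j9]
  rw [abs_le] at *
  constructor <;> linarith [b1.1, b1.2, b21.1, b21.2, b22.1, b22.2, b3.1, b3.2]

theorem lz_limit (k : ℕ) : Tendsto (fun T : ℝ =>
    ∫ Y in (0:ℝ)..(2 * T), (2 * T - Y) * lzG k ((2 * T - Y) * Y)) atTop (𝓝 ((π / 2) ^ (k + 1))) := by
  obtain ⟨C, hC, h1⟩ := lzDecay_G k (3/4) (by norm_num) (by norm_num)
  obtain ⟨D, hD, h2⟩ := lzDecay_H k (3/4) (by norm_num) (by norm_num)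
  have hb : ∀ᶠ T : ℝ in atTop, ‖(∫ Y in (0:ℝ)..(2 * T), (2 * T - Y) * lzG k ((2 * T - Y) * Y))
      - (π / 2) ^ (k + 1)‖ ≤ 50 * (C + D) / √T := by
    filter_upwards [eventually_ge_atTop 2] with T hT
    refine lz_limit_bound (lzG k) (lzH k) _ (C + D) (by linarith) (lzG_cont k) (lzH_deriv k)
      (by simp [lzH]) (fun z hz => (h1 z hz).trans ?_) (fun z hz => (h2 z hz).trans ?_) T hT
    · apply mul_le_mul_of_nonneg_right (by linarith); positivity
    · apply mul_le_mul_of_nonneg_right (by linarith); positivity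
  rw [tendsto_iff_norm_sub_tendsto_zero]
  refine squeeze_zero' (Filter.Eventually.of_forall fun _ => norm_nonneg _) hb ?_
  exact Real.tendsto_sqrt_atTop.const_div_atTop _

/-- For every positive integer `n`, the iterated improper complex integral
`J_n = ∫_{-∞}^{∞} ds₁ e^{−is₁²} ∫_{-∞}^{s₁} ds₂ e^{is₂²} ⋯
       ∫_{-∞}^{s_{2n-1}} ds_{2n} e^{is_{2n}²}`,
understood as the limit as `T → ∞` of the integral over the simplex
`{(s₁,…,s_{2n}) : −T ≤ s_{2n} ≤ ⋯ ≤ s₁ ≤ T}` of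
`exp(−i(s₁² − s₂² + s₃² − s₄² + ⋯ + s_{2n−1}² − s_{2n}²))`,
converges and equals `(1/n!)·(π/2)ⁿ` (a real number). -/
theorem Jn_eq (n : ℕ) (hn : 0 < n) :
    Tendsto (fun T : ℝ =>
        ∫ s in {s : Fin (2 * n) → ℝ |
            (∀ i j : Fin (2 * n), i ≤ j → s j ≤ s i) ∧ ∀ i, -T ≤ s i ∧ s i ≤ T},
          Complex.exp (-Complex.I *
            (∑ k : Fin n,
              (((s ⟨2 * k.1, by have := k.isLt; omega⟩ : ℝ) : ℂ) ^ 2 -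
               ((s ⟨2 * k.1 + 1, by have := k.isLt; omega⟩ : ℝ) : ℂ) ^ 2))))
      atTop (𝓝 (((1 / n.factorial * (π / 2) ^ n : ℝ) : ℂ))) := by
  obtain ⟨k, rfl⟩ : ∃ k, n = k + 1 := ⟨n - 1, by omega⟩
  have h := ((lz_limit k).const_mul (((k + 1).factorial : ℝ)⁻¹))
  have h2 := (Complex.continuous_ofReal.tendsto _).comp h
  rw [one_div]
  refine h2.congr' ?_
  filter_upwards [eventually_ge_atTop 0] with T hT
  simp_rw [fun s => lz_prod (k + 1) s (fun j => by have := j.isLt; omega)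
    (fun j => by have := j.isLt; omega)]
  exact (lz_main_formula k T hT).symm
end

section
/- For 0 < α < 1, the function Ĩ(α) = ∫₀^{∞} (dx/x) ∫₀^{x} (dy/y) [cos(x − αy) − cos x] is differentiable in α with derivative dĨ/dα = −ln(1 − α)/α. -/
open Real MeasureTheory Filter Topology intervalIntegral

lemma aux_rl (g : ℝ → ℝ) (hg : IntervalIntegrable g volume 0 1) (α : ℝ) (hα : 0 < α) :
    Tendsto (fun T : ℝ => ∫ t in (0:ℝ)..1, g t * Real.cos (T * (1 - α * t))) atTop (𝓝 0) := by
  set f : ℝ → ℂ := (Set.Ioc (0:ℝ) 1).indicator (fun t => (g t : ℂ)) with hf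
  have hgi : IntegrableOn g (Set.Ioc 0 1) := by
    rwa [intervalIntegrable_iff_integrableOn_Ioc_of_le zero_le_one] at hg
  have h1 := Real.tendsto_integral_exp_smul_cocompact f
  have h2 : Tendsto (fun T : ℝ => T * (α / (2 * π))) atTop (cocompact ℝ) :=
    (tendsto_id.atTop_mul_const (by positivity)).mono_right atTop_le_cocompact
  have h3 := (h1.comp h2).norm
  rw [norm_zero] at h3
  refine squeeze_zero_norm (fun T => ?_) h3
  have key : ((∫ t in (0:ℝ)..1, g t * Real.cos (T * (1 - α * t))) : ℝ) =
      (Complex.exp (T * Complex.I) * ∫ v : ℝ, Real.fourierChar (-(v * (T * (α / (2 * π))))) • f v).re := by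
    have e1 : (fun v : ℝ => Real.fourierChar (-(v * (T * (α / (2 * π))))) • f v) =
        (Set.Ioc (0:ℝ) 1).indicator
          (fun v => Complex.exp (-(v * T * α) * Complex.I) * (g v : ℂ)) := by
      ext v
      by_cases hv : v ∈ Set.Ioc (0:ℝ) 1
      · rw [hf, Set.indicator_of_mem hv, Set.indicator_of_mem hv, Circle.smul_def,
          Real.fourierChar_apply, smul_eq_mul]
        congr 2
        push_cast
        have : (π : ℂ) ≠ 0 := by exact_mod_cast Real.pi_ne_zero
        field_simp
      · rw [hf, Set.indicator_of_notMem hv, Set.indicator_of_notMem hv, smul_zero]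
    rw [e1, MeasureTheory.integral_indicator measurableSet_Ioc, ← MeasureTheory.integral_const_mul,
      intervalIntegral.integral_of_le zero_le_one]
    have hint : Integrable (fun v : ℝ => Complex.exp (T * Complex.I) *
        (Complex.exp (-(v * T * α) * Complex.I) * (g v : ℂ))) (volume.restrict (Set.Ioc 0 1)) := by
      apply Integrable.const_mul
      refine Integrable.bdd_mul (c := 1) hgi.ofReal
        (Continuous.aestronglyMeasurable (by fun_prop)) (Eventually.of_forall fun v => ?_)
      have := Complex.norm_exp_ofReal_mul_I (-(v * T * α))
      push_cast at this
      exact this.le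
    have := integral_re hint
    simp only [RCLike.re_to_complex] at this
    rw [← this]
    congr 1
    ext v
    rw [← mul_assoc, ← Complex.exp_add]
    have e2 : (T * Complex.I + -(v * T * α) * Complex.I : ℂ) =
      ((T * (1 - α * v) : ℝ) : ℂ) * Complex.I := by push_cast; ring
    rw [e2, Complex.re_mul_ofReal, Complex.exp_ofReal_mul_I_re]
    ring
  rw [key, Real.norm_eq_abs]
  refine (Complex.abs_re_le_norm _).trans ?_
  rw [norm_mul, Complex.norm_exp_ofReal_mul_I, one_mul]
  rfl

lemma aux_bound (α t : ℝ) (h1 : α ≤ 1) (ht : t ∈ Set.Ioc (0:ℝ) 1) :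
    |Real.log t / (1 - α * t)| ≤ 1 - Real.log t := by
  obtain ⟨h0, h2⟩ := ht
  have hl : Real.log t ≤ 0 := Real.log_nonpos h0.le h2
  rcases h2.eq_or_lt with rfl | h2
  · simp
  have hp : 0 < 1 - t := by linarith
  have hpa : 1 - t ≤ 1 - α * t := by nlinarith
  rw [abs_div, abs_of_nonpos hl, abs_of_pos (by linarith), div_le_iff₀ (by linarith)]
  have := Real.one_sub_inv_le_log_of_pos h0
  have h3 : t * (1 - t⁻¹) ≤ t * Real.log t := by gcongr
  have h4 : t * (1 - t⁻¹) = t - 1 := by field_simp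
  nlinarith

lemma aux_int (α : ℝ) (h1 : α ≤ 1) :
    IntervalIntegrable (fun t => Real.log t / (1 - α * t)) volume 0 1 := by
  refine IntervalIntegrable.mono_fun' (g := fun t => 1 - Real.log t)
    (intervalIntegrable_const.sub intervalIntegrable_log')
    (Measurable.aestronglyMeasurable (by fun_prop)) ?_
  rw [Set.uIoc_of_le zero_le_one]
  exact (ae_restrict_iff' measurableSet_Ioc).2 (Eventually.of_forall fun t ht => aux_bound α t h1 ht)

lemma aux_logmul (h : ℝ → ℝ) (hh : Continuous h) :
    IntervalIntegrable (fun t => Real.log t * h t) volume 0 1 :=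
  intervalIntegrable_log'.mul_continuousOn hh.continuousOn

lemma aux_inner (α x : ℝ) (hx : 0 < x) :
    ∫ y in (0:ℝ)..x, (Real.cos (x - α * y) - Real.cos x) / y =
      x * (-α * ∫ t in (0:ℝ)..1, Real.log t * Real.sin (x * (1 - α * t))) := by
  have e1 := mul_integral_comp_mul_left (a := 0) (b := 1) (c := x)
    (f := fun y => (Real.cos (x - α * y) - Real.cos x) / y)
  rw [mul_zero, mul_one] at e1
  rw [← e1, ← intervalIntegral.integral_const_mul]
  have hb : ∀ t : ℝ, |Real.cos (x * (1 - α * t)) - Real.cos x| ≤ |x * α| * |t| := fun t => by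
    refine (Real.abs_cos_sub_cos_le _ _).trans (le_of_eq ?_)
    rw [← abs_mul, ← abs_neg]; congr 1; ring
  have i1 : IntervalIntegrable (fun t => (Real.cos (x * (1 - α * t)) - Real.cos x) / t)
      volume 0 1 := by
    refine IntervalIntegrable.mono_fun' (g := fun t => |x * α|)
      intervalIntegrable_const (Measurable.aestronglyMeasurable (by fun_prop)) ?_
    refine Eventually.of_forall fun t => ?_
    simp only [Real.norm_eq_abs, abs_div]
    exact div_le_of_le_mul₀ (abs_nonneg _) (abs_nonneg _) (hb t)
  have i2 := (aux_logmul (fun t => Real.sin (x * (1 - α * t))) (by fun_prop)).const_mul (x * α)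
  have ftc := integral_eq_sub_of_hasDerivAt_of_le (a := 0) (b := 1) zero_le_one
    (f := fun t => (Real.cos (x * (1 - α * t)) - Real.cos x) * Real.log t)
    (f' := fun t => (Real.cos (x * (1 - α * t)) - Real.cos x) / t +
      x * α * (Real.log t * Real.sin (x * (1 - α * t)))) ?_ ?_ (i1.add i2)
  · rw [intervalIntegral.integral_add i1 i2, intervalIntegral.integral_const_mul] at ftc
    simp only [Real.log_one, Real.log_zero, mul_zero, sub_zero] at ftc
    have : ∀ t, (Real.cos (x - α * (x * t)) - Real.cos x) / (x * t) =
        x⁻¹ * ((Real.cos (x * (1 - α * t)) - Real.cos x) / t) := fun t => by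
      rw [show x - α * (x * t) = x * (1 - α * t) by ring, ← div_div, div_right_comm, div_eq_inv_mul]
    simp only [this]
    rw [intervalIntegral.integral_const_mul, intervalIntegral.integral_const_mul,
      mul_inv_cancel_left₀ hx.ne']
    linear_combination ftc
  · intro t ht
    apply ContinuousAt.continuousWithinAt
    rcases eq_or_ne t 0 with rfl | h0
    · unfold ContinuousAt
      simp only [Real.log_zero, mul_zero]
      have hc : Tendsto (fun t : ℝ => |x * α| * |t * Real.log t|) (𝓝 0) (𝓝 0) := by
        have : Continuous (fun t : ℝ => |x * α| * |t * Real.log t|) :=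
          continuous_const.mul Real.continuous_mul_log.abs
        simpa using this.tendsto 0
      refine squeeze_zero_norm (fun t => ?_) hc
      rw [Real.norm_eq_abs, abs_mul, abs_mul t, ← mul_assoc]
      exact mul_le_mul_of_nonneg_right (hb t) (abs_nonneg _)
    · exact ContinuousAt.mul (by fun_prop) (Real.continuousAt_log h0)
  · intro t ht
    have d1 : HasDerivAt (fun t : ℝ => x * (1 - α * t)) (x * (-(α * 1))) t :=
      (((hasDerivAt_id t).const_mul α).const_sub 1).const_mul x
    have d2 := (d1.cos.sub_const (Real.cos x)).mul (Real.hasDerivAt_log ht.1.ne')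
    refine d2.congr_deriv ?_
    rw [div_eq_mul_inv]; ring

lemma aux_fubini (α a b : ℝ) (hα : α ≤ 1) :
    ∫ x in a..b, ∫ t in (0:ℝ)..1, Real.log t * Real.sin (x * (1 - α * t)) =
    ∫ t in (0:ℝ)..1, (Real.log t / (1 - α * t) * Real.cos (a * (1 - α * t)) -
      Real.log t / (1 - α * t) * Real.cos (b * (1 - α * t))) := by
  simp only [intervalIntegral.integral_of_le zero_le_one]
  rw [MeasureTheory.intervalIntegral_integral_swap]
  · refine setIntegral_congr_fun measurableSet_Ioc fun t ht => ?_
    rw [intervalIntegral.integral_const_mul]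
    rcases eq_or_ne (Real.log t) 0 with h | h
    · simp [h]
    have hne : 1 - α * t ≠ 0 := by
      have : t ≠ 1 := fun h' => h (by simp [h'])
      have : t < 1 := lt_of_le_of_ne ht.2 this
      have := ht.1
      nlinarith
    rw [intervalIntegral.integral_comp_mul_right _ hne, integral_sin, smul_eq_mul]
    field_simp
  · have hl : Integrable Real.log (volume.restrict (Set.Ioc (0:ℝ) 1)) := by
      have := intervalIntegrable_log' (a := 0) (b := 1)
      rwa [intervalIntegrable_iff_integrableOn_Ioc_of_le zero_le_one] at this
    have h1 : Integrable (fun _ : ℝ => (1:ℝ)) (volume.restrict (Set.uIoc a b)) :=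
      (intervalIntegrable_iff.1 (intervalIntegrable_const (c := (1:ℝ))))
    have := (h1.mul_prod hl).mul_bdd (c := 1)
      (g := fun z : ℝ × ℝ => Real.sin (z.1 * (1 - α * z.2)))
      (Continuous.aestronglyMeasurable (by fun_prop))
      (Eventually.of_forall fun z => Real.abs_sin_le_one _)
    simpa [Function.uncurry_def] using this

lemma aux_zero (α : ℝ) (hα : α ≤ 1) :
    Tendsto (fun e : ℝ => ∫ t in (0:ℝ)..1, Real.log t / (1 - α * t) * Real.cos (e * (1 - α * t)))
      (𝓝[>] 0) (𝓝 (∫ t in (0:ℝ)..1, Real.log t / (1 - α * t))) := by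
  apply intervalIntegral.tendsto_integral_filter_of_dominated_convergence
    (fun t => |Real.log t / (1 - α * t)|)
  · exact Eventually.of_forall fun e => Measurable.aestronglyMeasurable (by fun_prop)
  · refine Eventually.of_forall fun e => Eventually.of_forall fun t _ => ?_
    rw [norm_mul]
    exact mul_le_of_le_one_right (norm_nonneg _) (Real.abs_cos_le_one _)
  · exact (aux_int α hα).abs
  · refine Eventually.of_forall fun t _ => ?_
    have : Continuous (fun e : ℝ => Real.log t / (1 - α * t) * Real.cos (e * (1 - α * t))) := by
      fun_prop
    have := this.tendsto 0
    simp only [zero_mul, Real.cos_zero, mul_one] at this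
    exact this.mono_left nhdsWithin_le_nhds

lemma aux_deriv_int (α : ℝ) (h0 : 0 < α) (h1 : α < 1) 
    (hi : IntervalIntegrable (fun t => -(Real.log t / (1 - α * t) ^ 2)) volume 0 1) :
    ∫ t in (0:ℝ)..1, -(Real.log t / (1 - α * t) ^ 2) = -Real.log (1 - α) / α := by
  have hp : ∀ t ∈ Set.Icc (0:ℝ) 1, 1 - α * t ≠ 0 := fun t ht => by
    have := ht.1; have := ht.2; nlinarith
  rw [integral_eq_sub_of_hasDerivAt_of_le (a := 0) (b := 1) zero_le_one
    (f := fun t => -((t * Real.log t) / (1 - α * t)) - Real.log (1 - α * t) / α) ?_ ?_ hi]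
  · simp; ring
  · have c := Real.continuous_mul_log
    have c1 : Continuous fun t : ℝ => 1 - α * t := by fun_prop
    exact (c.continuousOn.div c1.continuousOn hp).neg.sub
      ((c1.continuousOn.log hp).div_const α)
  · intro t ht
    have hpt := hp t (Set.Ioo_subset_Icc_self ht)
    have ht0 := ht.1.ne'
    have d1 : HasDerivAt (fun t : ℝ => (1 - α * t)) (-(α * 1)) t :=
      (((hasDerivAt_id t).const_mul α).const_sub 1)
    have d2 := (((hasDerivAt_id t).mul (Real.hasDerivAt_log ht0)).div d1 hpt).neg.sub
      ((d1.log hpt).div_const α)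
    refine d2.congr_deriv ?_
    simp only [id, Pi.mul_apply]
    field_simp
    ring

lemma aux_deriv (α : ℝ) (h0 : 0 < α) (h1 : α < 1) :
    HasDerivAt (fun α : ℝ => ∫ t in (0:ℝ)..1, -α * (Real.log t / (1 - α * t)))
      (-Real.log (1 - α) / α) α := by
  obtain ⟨c, hc, hc1⟩ := exists_between h1
  have := intervalIntegral.hasDerivAt_integral_of_dominated_loc_of_deriv_le (μ := volume)
    (a := (0:ℝ)) (b := 1) (x₀ := α) (s := Set.Iio c) 
    (F := fun α t => -α * (Real.log t / (1 - α * t)))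
    (F' := fun α t => -(Real.log t / (1 - α * t) ^ 2))
    (bound := fun t => |Real.log t| * ((1 - c) ^ 2)⁻¹)
    (Iio_mem_nhds hc)
    (Eventually.of_forall fun e => Measurable.aestronglyMeasurable (by fun_prop))
    ((aux_int α h1.le).const_mul _)
    (Measurable.aestronglyMeasurable (by fun_prop))
    (Eventually.of_forall fun t ht β hβ => ?_)
    (intervalIntegrable_log'.abs.mul_const _)
    (Eventually.of_forall fun t ht β hβ => ?_)
  · rw [← aux_deriv_int α h0 h1 this.1]
    exact this.2
  all_goals
    rw [Set.uIoc_of_le zero_le_one] at ht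
    have hβ' : β < c := hβ
    have ht0 := ht.1
    have ht1 := ht.2
  · have hq : 1 - c ≤ 1 - β * t := by
      have : β * t ≤ c * t := by gcongr
      have : c * t ≤ c := by nlinarith
      linarith
    have hcp : 0 < 1 - c := by linarith
    rw [norm_neg, norm_div, Real.norm_eq_abs, div_eq_mul_inv, norm_pow, Real.norm_eq_abs,
      abs_of_pos (by linarith : 0 < 1 - β * t)]
    gcongr
  · have hq : 1 - β * t ≠ 0 := by
      have : β * t < c * t := by gcongr
      have : c * t ≤ c := by nlinarith
      linarith
    have d1 : HasDerivAt (fun β : ℝ => (1 - β * t)) (-(1 * t)) β :=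
      (((hasDerivAt_id β).mul_const t).const_sub 1)
    have d2 := (hasDerivAt_id β).neg.mul ((hasDerivAt_const β (Real.log t)).div d1 hq)
    refine d2.congr_deriv ?_
    simp
    field_simp
    ring

/-- For `0 ≤ α ≤ 1`, the improper integral
`Ĩ(α) = ∫₀^{∞} (dx/x) ∫₀^{x} (dy/y) [cos(x − αy) − cos x]`
(defined as the limit `ε → 0⁺`, `T → ∞` of the corresponding proper integrals)
exists, and for `0 < α < 1` the function `Ĩ` is differentiable in `α` with
derivative `dĨ/dα = −ln(1 − α)/α`. -/
theorem Itilde_hasDerivAt :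
    ∃ Itilde : ℝ → ℝ,
      (∀ α ∈ Set.Icc (0 : ℝ) 1,
        Tendsto (fun p : ℝ × ℝ =>
            ∫ x in p.1..p.2, (1 / x) *
              ∫ y in (0 : ℝ)..x, (Real.cos (x - α * y) - Real.cos x) / y)
          ((𝓝[>] (0 : ℝ)) ×ˢ atTop) (𝓝 (Itilde α))) ∧
      ∀ α ∈ Set.Ioo (0 : ℝ) 1,
        HasDerivAt Itilde (-Real.log (1 - α) / α) α := by
  refine ⟨fun α => ∫ t in (0:ℝ)..1, -α * (Real.log t / (1 - α * t)), ?_,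
    fun α hα => aux_deriv α hα.1 hα.2⟩
  intro α hα
  have hev : ∀ᶠ p : ℝ × ℝ in (𝓝[>] (0 : ℝ)) ×ˢ atTop,
      -α * ((∫ t in (0:ℝ)..1, Real.log t / (1 - α * t) * Real.cos (p.1 * (1 - α * t))) -
        ∫ t in (0:ℝ)..1, Real.log t / (1 - α * t) * Real.cos (p.2 * (1 - α * t))) =
      ∫ x in p.1..p.2, (1 / x) *
              ∫ y in (0 : ℝ)..x, (Real.cos (x - α * y) - Real.cos x) / y := by
    have e1 : ∀ᶠ e : ℝ in 𝓝[>] (0:ℝ), 0 < e := self_mem_nhdsWithin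
    filter_upwards [e1.prod_mk (eventually_gt_atTop (0:ℝ))] with p hp
    have hi : ∀ e : ℝ, IntervalIntegrable
        (fun t => Real.log t / (1 - α * t) * Real.cos (e * (1 - α * t))) volume 0 1 := fun e =>
      (aux_int α hα.2).mul_continuousOn (by fun_prop)
    rw [← intervalIntegral.integral_sub (hi _) (hi _), ← aux_fubini α p.1 p.2 hα.2,
      ← intervalIntegral.integral_const_mul]
    refine intervalIntegral.integral_congr fun x hx => ?_
    have hx0 : 0 < x := lt_of_lt_of_le (lt_min hp.1 hp.2) hx.1
    rw [aux_inner α x hx0, one_div, inv_mul_cancel_left₀ hx0.ne']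
  refine Tendsto.congr' hev ?_
  beta_reduce
  rw [intervalIntegral.integral_const_mul]
  rcases hα.1.eq_or_lt with rfl | h0
  · simp
  · have t1 := (aux_zero α hα.2).comp (tendsto_fst (g := (atTop : Filter ℝ)))
    have t2 := (aux_rl _ (aux_int α hα.2) α h0).comp (tendsto_snd (f := 𝓝[>] (0:ℝ)))
    simpa using (t1.sub t2).const_mul (-α)
end

section
/- For all real ω₁ and ω₂, the improper double integral ∫_{-∞}^{∞} ds₁ ∫_{-∞}^{∞} ds₂ e^{iω₁s₁}·e^{−is₂(ω₁−ω₂)}·cos(s₁² − s₂²) converges and equals π·cos[(1/4)·ω₂·(2ω₁ − ω₂)]. -/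
open Real Complex Filter Topology intervalIntegral

lemma fresnel_identity : ∃ g : ℂ → ℂ, ∀ z, HasDerivAt g (Complex.exp (Complex.I * z ^ 2)) z := by
  have h : Differentiable ℂ (fun z : ℂ => Complex.exp (Complex.I * z ^ 2)) := by fun_prop
  obtain ⟨g, hg⟩ := h.isExactOn_univ
  exact ⟨g, fun z => hg z (Set.mem_univ z)⟩

lemma fresnel_line (g : ℂ → ℂ) (hg : ∀ z, HasDerivAt g (Complex.exp (Complex.I * z ^ 2)) z)
    (a d : ℂ) (T : ℝ) :
    ∫ s in (0 : ℝ)..T, Complex.exp (Complex.I * (a + d * s) ^ 2) * d = g (a + d * T) - g a := by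
  have h : ∀ x ∈ Set.uIcc 0 T, HasDerivAt (fun s : ℝ => g (a + d * s))
      (Complex.exp (Complex.I * (a + d * x) ^ 2) * d) x := by
    intro x _
    have h1 : HasDerivAt (fun s : ℝ => a + d * (s : ℂ)) d x := by
      simpa using ((Complex.ofRealCLM.hasDerivAt (x := x)).const_mul d).const_add a
    exact (hg (a + d * x)).comp x h1
  rw [integral_eq_sub_of_hasDerivAt h (Continuous.intervalIntegrable (by fun_prop) _ _)]
  simp

lemma fresnel_vert (T : ℝ) (hT : 0 < T) :
    ‖∫ s in (0 : ℝ)..T, Complex.exp (Complex.I * (T + Complex.I * s) ^ 2) * Complex.I‖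
      ≤ 1 / (2 * T) := by
  have h1 : ‖∫ s in (0 : ℝ)..T, Complex.exp (Complex.I * (T + Complex.I * s) ^ 2) * Complex.I‖
      ≤ ∫ s in (0 : ℝ)..T, Real.exp (-(2 * T) * s) := by
    apply norm_integral_le_of_norm_le hT.le
    · refine Eventually.of_forall fun s _ => ?_
      rw [norm_mul, Complex.norm_exp, Complex.norm_I, mul_one]
      apply Real.exp_le_exp.2
      simp [pow_two]
      nlinarith
    · exact Continuous.intervalIntegrable (by fun_prop) _ _
  refine h1.trans ?_
  have h : ∀ x ∈ Set.uIcc 0 T, HasDerivAt (fun s : ℝ => -(1 / (2 * T)) * Real.exp (-(2 * T) * s))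
      (Real.exp (-(2 * T) * x)) x := by
    intro x _
    have := (((hasDerivAt_id x).const_mul (-(2 * T))).exp).const_mul (-(1 / (2 * T)))
    have e2 : -(1 / (2 * T)) * (Real.exp (-(2 * T) * x) * (-(2 * T) * 1)) =
        Real.exp (-(2 * T) * x) := by
      field_simp
    rw [← e2]
    exact this
  rw [integral_eq_sub_of_hasDerivAt h (Continuous.intervalIntegrable (by fun_prop) _ _)]
  have : 0 < 1 / (2 * T) * Real.exp (-(2 * T) * T) := by positivity
  simp only [mul_zero, Real.exp_zero]
  linarith

lemma fresnel_half : Tendsto (fun T : ℝ => ∫ s in (0 : ℝ)..T, Complex.exp (Complex.I * (s : ℂ) ^ 2))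
    atTop (𝓝 ((1 + Complex.I) * ((√(π / 2) / 2 : ℝ) : ℂ))) := by
  obtain ⟨g, hg⟩ := fresnel_identity
  have e : ∀ T : ℝ, ∫ s in (0 : ℝ)..T, Complex.exp (Complex.I * (s : ℂ) ^ 2)
      = (1 + Complex.I) * ((∫ s in (0 : ℝ)..T, Real.exp (-2 * s ^ 2) : ℝ) : ℂ)
        - ∫ s in (0 : ℝ)..T, Complex.exp (Complex.I * (T + Complex.I * s) ^ 2) * Complex.I := by
    intro T
    have a1 := fresnel_line g hg 0 1 T
    have a2 := fresnel_line g hg 0 (1 + Complex.I) T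
    have a3 := fresnel_line g hg T Complex.I T
    simp only [zero_add, one_mul, mul_one] at a1 a2
    rw [a3, a1, ← intervalIntegral.integral_ofReal, ← intervalIntegral.integral_const_mul]
    have : ∫ s in (0 : ℝ)..T, (1 + Complex.I) * ((Real.exp (-2 * s ^ 2) : ℝ) : ℂ) =
        g ((1 + Complex.I) * T) - g 0 := by
      rw [← a2]
      apply intervalIntegral.integral_congr
      intro s _
      simp only
      rw [mul_comm]
      push_cast
      congr 2
      linear_combination (-Complex.I * s ^ 2 - 2 * s ^ 2) * Complex.I_sq
    rw [this, show (1 + Complex.I) * (T : ℂ) = T + Complex.I * T by ring]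
    ring
  simp_rw [e]
  have l1 : Tendsto (fun T : ℝ => ∫ s in (0 : ℝ)..T, Real.exp (-2 * s ^ 2)) atTop
      (𝓝 (√(π / 2) / 2)) := by
    rw [← integral_gaussian_Ioi]
    exact MeasureTheory.intervalIntegral_tendsto_integral_Ioi 0
      (integrable_exp_neg_mul_sq (by norm_num)).integrableOn tendsto_id
  have l2 : Tendsto (fun T : ℝ => ∫ s in (0 : ℝ)..T,
      Complex.exp (Complex.I * (T + Complex.I * s) ^ 2) * Complex.I) atTop (𝓝 0) := by
    apply squeeze_zero_norm' (a := fun T : ℝ => 1 / (2 * T))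
    · filter_upwards [eventually_gt_atTop 0] with T hT using fresnel_vert T hT
    · simp_rw [one_div]
      exact (tendsto_id.const_mul_atTop (by norm_num : (0:ℝ) < 2)).inv_tendsto_atTop
  simpa using (((Complex.continuous_ofReal.tendsto _).comp l1).const_mul (1 + Complex.I)).sub l2

/-- The limiting value of the complete Fresnel integral. -/
noncomputable def fresnelL : ℂ := (1 + Complex.I) * ((√(π / 2) : ℝ) : ℂ)

lemma fresnelL_mul : fresnelL * (starRingEnd ℂ) fresnelL = (π : ℂ) := by
  have h : (((√(π / 2) : ℝ) : ℂ)) ^ 2 = π / 2 := by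
    rw [← Complex.ofReal_pow, Real.sq_sqrt (by positivity)]; push_cast; ring
  simp only [fresnelL, map_mul, map_add, map_one, Complex.conj_I, Complex.conj_ofReal]
  linear_combination 2 * h - (((√(π / 2) : ℝ) : ℂ)) ^ 2 * Complex.I_sq

lemma fresnel_plus (ω : ℝ) : Tendsto (fun T : ℝ => ∫ s in (-T)..T,
    Complex.exp (Complex.I * ((s : ℂ) ^ 2 + ω * s))) atTop
    (𝓝 (Complex.exp (-Complex.I * (ω ^ 2 / 4)) * fresnelL)) := by
  have hi : ∀ a b : ℝ, IntervalIntegrable (fun s : ℝ => Complex.exp (Complex.I * (s : ℂ) ^ 2))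
      MeasureTheory.volume a b := fun a b => Continuous.intervalIntegrable (by fun_prop) _ _
  have e : ∀ T : ℝ, ∫ s in (-T)..T, Complex.exp (Complex.I * ((s : ℂ) ^ 2 + ω * s))
      = Complex.exp (-Complex.I * (ω ^ 2 / 4)) *
        ((∫ s in (0 : ℝ)..(T + ω / 2), Complex.exp (Complex.I * (s : ℂ) ^ 2)) +
         ∫ s in (0 : ℝ)..(T - ω / 2), Complex.exp (Complex.I * (s : ℂ) ^ 2)) := by
    intro T
    have h1 := intervalIntegral.integral_comp_add_right (a := -T) (b := T)
      (fun s : ℝ => Complex.exp (Complex.I * (s : ℂ) ^ 2)) (ω / 2)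
    have h2 := intervalIntegral.integral_comp_neg (a := 0) (b := T - ω / 2)
      (fun s : ℝ => Complex.exp (Complex.I * (s : ℂ) ^ 2))
    simp only [Complex.ofReal_neg, neg_sq, neg_zero] at h2
    rw [h2, add_comm, show -(T - ω / 2) = -T + ω / 2 by ring,
      intervalIntegral.integral_add_adjacent_intervals (hi _ _) (hi _ _), ← h1,
      ← intervalIntegral.integral_const_mul]
    apply intervalIntegral.integral_congr
    intro s _
    simp only
    rw [← Complex.exp_add]
    congr 1
    push_cast
    ring
  simp_rw [e]
  have t1 := fresnel_half.comp (tendsto_atTop_add_const_right atTop (ω / 2) tendsto_id)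
  have t2 := fresnel_half.comp (tendsto_atTop_add_const_right atTop (-(ω / 2)) tendsto_id)
  have := (t1.add t2).const_mul (Complex.exp (-Complex.I * (ω ^ 2 / 4)))
  have hL : fresnelL = (1 + Complex.I) * ((√(π / 2) / 2 : ℝ) : ℂ) +
      (1 + Complex.I) * ((√(π / 2) / 2 : ℝ) : ℂ) := by
    rw [fresnelL]
    push_cast
    ring
  rw [hL]
  simp only [sub_eq_add_neg]
  exact this

lemma fresnel_minus (ω : ℝ) : Tendsto (fun T : ℝ => ∫ s in (-T)..T,
    Complex.exp (-Complex.I * ((s : ℂ) ^ 2 + ω * s))) atTop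
    (𝓝 (Complex.exp (Complex.I * (ω ^ 2 / 4)) * (starRingEnd ℂ) fresnelL)) := by
  have h := (Complex.continuous_conj.tendsto _).comp (fresnel_plus ω)
  have e : ∀ T : ℝ, (starRingEnd ℂ) (∫ s in (-T)..T,
      Complex.exp (Complex.I * ((s : ℂ) ^ 2 + ω * s))) = ∫ s in (-T)..T,
      Complex.exp (-Complex.I * ((s : ℂ) ^ 2 + ω * s)) := by
    intro T
    rw [← intervalIntegral.intervalIntegral_conj]
    apply intervalIntegral.integral_congr
    intro s _
    simp [← Complex.exp_conj]
  convert h using 2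
  · rw [Function.comp, e]
  · have h4 : (starRingEnd ℂ) (4 : ℂ) = 4 := Complex.conj_ofNat 4
    simp [← Complex.exp_conj, h4]

/-- For all real `ω₁` and `ω₂`, the improper double integral
`∫_{-∞}^{∞} ds₁ ∫_{-∞}^{∞} ds₂ e^{iω₁s₁}·e^{−is₂(ω₁−ω₂)}·cos(s₁² − s₂²)`,
understood as the limit as `T → ∞` of the integral over the square
`[−T, T] × [−T, T]`, converges and equals `π·cos[(1/4)·ω₂·(2ω₁ − ω₂)]`
(a real number). -/
theorem double_fresnel_integral (ω₁ ω₂ : ℝ) :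
    Tendsto (fun T : ℝ =>
        ∫ s₁ in (-T)..T, ∫ s₂ in (-T)..T,
          Complex.exp (Complex.I * ω₁ * s₁) *
            Complex.exp (-Complex.I * s₂ * (ω₁ - ω₂)) *
            ((Real.cos (s₁ ^ 2 - s₂ ^ 2) : ℝ) : ℂ))
      atTop (𝓝 (((π * Real.cos (ω₂ * (2 * ω₁ - ω₂) / 4) : ℝ) : ℂ))) := by
  have key : ∀ T : ℝ, (∫ s₁ in (-T)..T, ∫ s₂ in (-T)..T,
          Complex.exp (Complex.I * ω₁ * s₁) *
            Complex.exp (-Complex.I * s₂ * (ω₁ - ω₂)) *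
            ((Real.cos (s₁ ^ 2 - s₂ ^ 2) : ℝ) : ℂ)) =
      1 / 2 * ((∫ s in (-T)..T, Complex.exp (Complex.I * ((s : ℂ) ^ 2 + ω₁ * s))) *
        ∫ s in (-T)..T, Complex.exp (-Complex.I * ((s : ℂ) ^ 2 + (ω₁ - ω₂ : ℝ) * s))) +
      1 / 2 * ((∫ s in (-T)..T, Complex.exp (-Complex.I * ((s : ℂ) ^ 2 + (-ω₁ : ℝ) * s))) *
        ∫ s in (-T)..T, Complex.exp (Complex.I * ((s : ℂ) ^ 2 + (-(ω₁ - ω₂) : ℝ) * s))) := by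
    intro T
    rw [← intervalIntegral.integral_mul_const, ← intervalIntegral.integral_mul_const,
      ← intervalIntegral.integral_const_mul, ← intervalIntegral.integral_const_mul,
      ← intervalIntegral.integral_add (Continuous.intervalIntegrable (by fun_prop) _ _)
        (Continuous.intervalIntegrable (by fun_prop) _ _)]
    apply intervalIntegral.integral_congr
    intro s₁ _
    simp only
    rw [← intervalIntegral.integral_const_mul, ← intervalIntegral.integral_const_mul,
      ← intervalIntegral.integral_const_mul, ← intervalIntegral.integral_const_mul,
      ← intervalIntegral.integral_add (Continuous.intervalIntegrable (by fun_prop) _ _)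
        (Continuous.intervalIntegrable (by fun_prop) _ _)]
    apply intervalIntegral.integral_congr
    intro s₂ _
    simp only
    rw [Complex.ofReal_cos, Complex.cos, ← Complex.exp_add, ← Complex.exp_add, ← Complex.exp_add,
      mul_div_assoc', mul_add, ← Complex.exp_add, ← Complex.exp_add, add_div, div_eq_inv_mul,
      div_eq_inv_mul, one_div]
    congr 3 <;> · push_cast; ring
  simp_rw [key]
  have h := (((fresnel_plus ω₁).mul (fresnel_minus (ω₁ - ω₂))).const_mul (1 / 2)).add
    (((fresnel_minus (-ω₁)).mul (fresnel_plus (-(ω₁ - ω₂)))).const_mul (1 / 2))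
  convert h using 2
  have r : ∀ a b x y : ℂ, (Complex.exp a * x) * (Complex.exp b * y) =
      Complex.exp (a + b) * (x * y) := by
    intro a b x y; rw [Complex.exp_add]; ring
  rw [r, r, mul_comm ((starRingEnd ℂ) fresnelL), fresnelL_mul, Complex.ofReal_mul,
    Complex.ofReal_cos, Complex.cos]
  rw [show -Complex.I * ((ω₁ : ℂ) ^ 2 / 4) + Complex.I * (((ω₁ - ω₂ : ℝ) : ℂ) ^ 2 / 4) =
      -((ω₂ * (2 * ω₁ - ω₂) / 4 : ℝ) : ℂ) * Complex.I by push_cast; ring,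
    show Complex.I * (((-ω₁ : ℝ) : ℂ) ^ 2 / 4) + -Complex.I * (((-(ω₁ - ω₂) : ℝ) : ℂ) ^ 2 / 4) =
      ((ω₂ * (2 * ω₁ - ω₂) / 4 : ℝ) : ℂ) * Complex.I by push_cast; ring]
  ring
end
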